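/- arXiv:1504.03500 — 2 statements merged into one kernel-verified Lean document; each statement's English description precedes it below -/
import Mathlib

section
/- Every cubic graph admits a 5-weak bisection. -/
open SimpleGraph

/-- A cubic graph: every vertex has degree 3. -/
def IsCubic {V : Type*} [Fintype V] (G : SimpleGraph V) : Prop :=
  ∀ v : V, Nat.card (G.neighborSet v) = 3

/-- A circular nowhere-zero `r`-flow: an orientation `dir` of `G` together with
a flow value `f` on each directed edge, with values in `[1, r-1]` and flow
conservation at every vertex. -/
structure CNZF {V : Type*} [Fintype V] (G : SimpleGraph V) (r : ℝ) where
  dir : V → V → Bool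
  f : V → V → ℝ
  orients : ∀ u v, G.Adj u v ↔ (dir u v = true ∨ dir v u = true)
  asymm : ∀ u v, dir u v = true → dir v u = false
  lb : ∀ u v, dir u v = true → 1 ≤ f u v
  ub : ∀ u v, dir u v = true → f u v ≤ r - 1
  conserv : ∀ v : V, (∑ u : V, if dir v u = true then f v u else 0)
      = ∑ u : V, if dir u v = true then f u v else 0

/-- Out-degree of a vertex in an orientation. -/
noncomputable def outDeg {V : Type*} (dir : V → V → Bool) (v : V) : ℕ :=
  Nat.card {u | dir v u = true}

/-- Every connected component of the subgraph induced by `S` is a tree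
on at most `m` vertices. -/
def MonoOK {V : Type*} (G : SimpleGraph V) (m : ℕ) (S : Set V) : Prop :=
  (G.induce S).IsAcyclic ∧
    ∀ c : (G.induce S).ConnectedComponent, Nat.card c.supp ≤ m

/-- A `k`-weak bisection, given by its first part `S`. -/
def IsWeakBisection {V : Type*} [Fintype V] (G : SimpleGraph V) (k : ℕ) (S : Set V) : Prop :=
  Nat.card S = Nat.card (Sᶜ : Set V) ∧ MonoOK G (k-2) S ∧ MonoOK G (k-2) (Sᶜ : Set V)

/-- Every monochromatic component of the 2-coloring `c` has at most `m` vertices. -/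
def MonoAtMost {V : Type*} (G : SimpleGraph V) (c : V → Bool) (m : ℕ) : Prop :=
  ∀ b : Bool, ∀ comp : (G.induce {v | c v = b}).ConnectedComponent,
    Nat.card comp.supp ≤ m

/-- Edges of `L_k` (on vertex labels `0, …, 5+2k`): `L_0` is `K_{3,3}` minus an
edge (parts `{0,1,4}` and `{2,3,5}`, edge `45` removed, degree-2 vertices `4,5`);
at step `j` the two new adjacent vertices `4+2j, 5+2j` are attached to the
previous degree-2 vertices `2+2j, 3+2j`. The degree-2 vertices of `L_k` are
`4+2k` and `5+2k`. -/
def LEdge (k : ℕ) (a b : ℕ) : Prop :=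
  (a, b) ∈ ({(0,2),(0,3),(0,5),(1,2),(1,3),(1,5),(4,2),(4,3)} : Set (ℕ × ℕ)) ∨
  ∃ j, 1 ≤ j ∧ j ≤ k ∧
    ((a, b) = (4+2*j, 5+2*j) ∨ (a, b) = (2+2*j, 4+2*j) ∨ (a, b) = (3+2*j, 5+2*j))

/-- The graph `L_k`. -/
def Lgraph (k : ℕ) : SimpleGraph (Fin (6+2*k)) :=
  SimpleGraph.fromRel (fun a b => LEdge k a.val b.val)

/-- Edges of `T_k`: one copy of `L'_k` (the copy of `L_k` on `0..5+2k` with apex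
`6+2k`), two copies of `L'_0` (on `7+2k..12+2k` with apex `13+2k`, and on
`14+2k..19+2k` with apex `20+2k`), and a central vertex `21+2k` adjacent to the
three apexes. -/
def TEdge (k : ℕ) (a b : ℕ) : Prop :=
  LEdge k a b
  ∨ (a = 6+2*k ∧ (b = 4+2*k ∨ b = 5+2*k))
  ∨ (∃ a' b', LEdge 0 a' b' ∧ a = 7+2*k+a' ∧ b = 7+2*k+b')
  ∨ (a = 13+2*k ∧ (b = 11+2*k ∨ b = 12+2*k))
  ∨ (∃ a' b', LEdge 0 a' b' ∧ a = 14+2*k+a' ∧ b = 14+2*k+b')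
  ∨ (a = 20+2*k ∧ (b = 18+2*k ∨ b = 19+2*k))
  ∨ (a = 21+2*k ∧ (b = 6+2*k ∨ b = 13+2*k ∨ b = 20+2*k))

/-- The cubic graph `T_k`. -/
def Tgraph (k : ℕ) : SimpleGraph (Fin (22+2*k)) :=
  SimpleGraph.fromRel (fun a b => TEdge k a.val b.val)

/-- A valid factor of `G`: a spanning subgraph all of whose components are paths
or cycles (equivalently, all degrees are 1 or 2), such that the two endpoints
(degree-1 vertices) of every odd component are non-adjacent in `G`; in particular
no component is an isolated vertex. -/
def IsValidFactor {V : Type*} (G H : SimpleGraph V) : Prop :=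
  H ≤ G ∧
  (∀ v : V, 1 ≤ Nat.card (H.neighborSet v) ∧ Nat.card (H.neighborSet v) ≤ 2) ∧
  ∀ c : H.ConnectedComponent, Odd (Nat.card c.supp) →
    ∀ u v : V, u ∈ c.supp → v ∈ c.supp → u ≠ v →
      Nat.card (H.neighborSet u) = 1 → Nat.card (H.neighborSet v) = 1 → ¬ G.Adj u v

/-- A component of `H` is a cycle iff all its vertices have degree 2 in `H`. -/
def IsCycleComp {V : Type*} (H : SimpleGraph V) (c : H.ConnectedComponent) : Prop :=
  ∀ v ∈ c.supp, Nat.card (H.neighborSet v) = 2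

/-- An odd cycle component. -/
def OddCycleComp {V : Type*} (H : SimpleGraph V) (c : H.ConnectedComponent) : Prop :=
  Odd (Nat.card c.supp) ∧ IsCycleComp H c

/-- An odd path component (a component with an odd number of vertices containing
a degree-1 vertex). -/
def OddPathComp {V : Type*} (H : SimpleGraph V) (c : H.ConnectedComponent) : Prop :=
  Odd (Nat.card c.supp) ∧ ∃ v ∈ c.supp, Nat.card (H.neighborSet v) = 1

noncomputable def numComponents {V : Type*} (H : SimpleGraph V) : ℕ := Nat.card H.ConnectedComponent

noncomputable def numOddCycles {V : Type*} (H : SimpleGraph V) : ℕ :=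
  Nat.card {c : H.ConnectedComponent // OddCycleComp H c}

/-- `H` is a valid factor of `G` with the minimum number of components. -/
def MinimizesComponents {V : Type*} (G H : SimpleGraph V) : Prop :=
  IsValidFactor G H ∧ ∀ H' : SimpleGraph V, IsValidFactor G H' →
    numComponents H ≤ numComponents H'

/-- `H` is a valid factor of `G` minimizing the number of components and,
subject to that, the number of odd cycles. -/
def IsMinValidFactor {V : Type*} (G H : SimpleGraph V) : Prop :=
  MinimizesComponents G H ∧
  ∀ H' : SimpleGraph V, IsValidFactor G H' →
    numComponents H' = numComponents H → numOddCycles H ≤ numOddCycles H'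

/-- An external vertex of a factor: an endpoint of a path component, or a vertex
of an odd cycle component. -/
def ExternalVtx {V : Type*} (H : SimpleGraph V) (v : V) : Prop :=
  Nat.card (H.neighborSet v) = 1 ∨ OddCycleComp H (H.connectedComponentMk v)

/-!
Partition the vertices into paths and colour each path alternately. Choosing, path by path, between
the two alternating colourings makes the colour classes equally large. An inner vertex of a path has
at most one neighbour of its own colour, so each monochromatic component is a star with at most
three vertices, provided that ends of paths cause no trouble: trouble comes from two adjacent ends
of equal colour, or from a path that is a single vertex of degree 3. A part of the partition is
*bad* if none of its Hamiltonian paths avoids this by itself. A bad part has an odd number of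
vertices, has a Hamiltonian path starting at each of its vertices, and sends at least three edges to
its complement.

Give weight 3 to bad parts and weight 2 to all others, and take a partition of minimum weight. Two
parts never merge into one, so ends of distinct parts are not adjacent. If an edge joins a bad part
`L` to a vertex `q` of another part `A q B`, then exchanging `L`, `A q B` for `A q L`, `B` shows by
minimality that `B`, and likewise `A`, is bad, and the partition remains optimal. Continuing from
`L`, `A` and `B` one grows a tree, as in matching theory, that ends with a set `M` of vertices and
`2 |M| + 1` bad sets all of whose outgoing edges lead to `M`. As `3 (2 |M| + 1) > 3 |M|`, this is
impossible in a subcubic graph, so an optimal partition has no bad part.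
-/

/-! ### Star forests -/

section StarForest

variable {W : Type*} {H : SimpleGraph W}

/-- A star forest: every edge has an endpoint of degree one. The monochromatic subgraphs of the
final colouring are of this kind. -/
def IsStarForest (H : SimpleGraph W) : Prop :=
  ∀ ⦃x y⦄, H.Adj x y → (H.neighborSet x).Subsingleton ∨ (H.neighborSet y).Subsingleton

theorem isBridge_of_subsingleton_neighborSet {x y : W} (hxy : H.Adj x y)
    (hx : (H.neighborSet x).Subsingleton) : H.IsBridge s(x, y) := by
  rw [isBridge_iff]
  rintro ⟨_ | ⟨hadj, _⟩⟩
  · exact hxy.ne rfl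
  · rw [deleteEdges_adj] at hadj
    exact hadj.2 (by rw [hx hadj.1 hxy]; rfl)

theorem IsStarForest.isAcyclic (hH : IsStarForest H) : H.IsAcyclic := by
  rw [isAcyclic_iff_forall_adj_isBridge]
  intro x y hxy
  rcases hH hxy with hx | hy
  · exact isBridge_of_subsingleton_neighborSet hxy hx
  · rw [Sym2.eq_swap]
    exact isBridge_of_subsingleton_neighborSet hxy.symm hy

theorem supp_subset_insert_neighborSet {z : W}
    (hz : ∀ y, H.Adj z y → (H.neighborSet y).Subsingleton) :
    (H.connectedComponentMk z).supp ⊆ insert z (H.neighborSet z) := by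
  intro v hv
  obtain ⟨w⟩ : H.Reachable v z := ConnectedComponent.exact hv
  clear hv
  induction w with
  | nil => exact Set.mem_insert _ _
  | cons hadj _ ih =>
    rcases ih hz with rfl | hzy
    · exact Set.mem_insert_of_mem _ hadj.symm
    · exact Set.mem_insert_iff.2 (Or.inl (hz _ hzy hadj.symm hzy.symm))

theorem IsStarForest.exists_supp_subset (hH : IsStarForest H) (C : H.ConnectedComponent) :
    ∃ z, C.supp ⊆ insert z (H.neighborSet z) := by
  induction C using ConnectedComponent.ind with | _ v
  by_cases hv : ∀ y, H.Adj v y → (H.neighborSet y).Subsingleton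
  · exact ⟨v, supp_subset_insert_neighborSet hv⟩
  · push Not at hv
    obtain ⟨y, hvy, hy⟩ := hv
    rw [ConnectedComponent.sound hvy.reachable]
    exact ⟨y, supp_subset_insert_neighborSet fun x hyx =>
      (hH hyx).resolve_left (Set.not_subsingleton_iff.2 hy)⟩

theorem IsStarForest.card_supp_le (hH : IsStarForest H) {m : ℕ}
    (hm : ∀ v, (H.neighborSet v).encard ≤ m) (C : H.ConnectedComponent) :
    Nat.card C.supp ≤ m + 1 := by
  obtain ⟨z, hz⟩ := hH.exists_supp_subset C
  have hle : C.supp.encard ≤ (m + 1 : ℕ) :=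
    calc C.supp.encard ≤ (insert z (H.neighborSet z)).encard := Set.encard_le_encard hz
      _ ≤ (H.neighborSet z).encard + 1 := Set.encard_insert_le _ _
      _ ≤ (m + 1 : ℕ) := by push_cast; gcongr; exact hm z
  exact (Set.encard_le_coe_iff_finite_ncard_le.1 hle).2

end StarForest

theorem monoOK_of_neighborSet_inter {V : Type*} {G : SimpleGraph V} {S : Set V} {m : ℕ}
    (hdeg : ∀ v ∈ S, (G.neighborSet v ∩ S).encard ≤ m)
    (hstar : ∀ x ∈ S, ∀ y ∈ S, G.Adj x y →
      (G.neighborSet x ∩ S).Subsingleton ∨ (G.neighborSet y ∩ S).Subsingleton) :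
    MonoOK G (m + 1) S := by
  have himage (v : S) :
      Subtype.val '' (G.induce S).neighborSet v = G.neighborSet v ∩ S := by
    ext w
    simp [and_comm]
  have hH : IsStarForest (G.induce S) := fun x y hxy =>
    (hstar x x.2 y y.2 hxy).imp
      (fun h => Subtype.val_injective.subsingleton_image_iff.1 (himage x ▸ h))
      (fun h => Subtype.val_injective.subsingleton_image_iff.1 (himage y ▸ h))
  refine ⟨hH.isAcyclic, hH.card_supp_le fun v => ?_⟩
  rw [← Subtype.val_injective.encard_image, himage]
  exact hdeg v v.2

/-! ### Alternating colourings -/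

section AlternatingColouring

variable {V : Type*}

/-- The colouring `c` alternates along the list `p`. The colours are the units `±1` of `ℤ`, so that
a colouring is balanced when its values sum to zero. -/
def IsAlternatingOn (c : V → ℤˣ) (p : List V) : Prop :=
  p.IsChain fun a b => c b = -c a

theorem IsAlternatingOn.congr {c d : V → ℤˣ} {p : List V} (hc : IsAlternatingOn c p) (s : ℤˣ)
    (hd : ∀ v ∈ p, d v = s * c v) : IsAlternatingOn d p :=
  List.IsChain.imp_of_mem_imp
    (fun a b ha hb hab => by rw [hd a ha, hd b hb, hab, mul_neg]) hc

theorem IsAlternatingOn.eq_neg_one_pow_mul {c : V → ℤˣ} {p : List V} (hc : IsAlternatingOn c p)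
    {x y : V} (hx : p.head? = some x) {i : ℕ} (hy : p[i]? = some y) : c y = (-1) ^ i * c x := by
  induction i generalizing y with
  | zero =>
    rw [← List.head?_eq_getElem?, hx, Option.some_inj] at hy
    simp [hy]
  | succ i ih =>
    obtain ⟨hi, rfl⟩ := List.getElem?_eq_some_iff.1 hy
    rw [List.isChain_iff_getElem.1 hc i hi, ih (List.getElem?_eq_getElem _), pow_succ]
    simp

theorem IsAlternatingOn.eq_neg_of_odd {c : V → ℤˣ} {p : List V} (hc : IsAlternatingOn c p)
    {x y : V} (hx : p.head? = some x) {i : ℕ} (hi : Odd i) (hy : p[i]? = some y) :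
    c y = -c x := by
  rw [hc.eq_neg_one_pow_mul hx hy, hi.neg_one_pow, neg_one_mul]

theorem IsAlternatingOn.sum_cons {c : V → ℤˣ} {a : V} {p : List V}
    (hc : IsAlternatingOn c (a :: p)) :
    ((a :: p).map fun v => (c v : ℤ)).sum = 0 ∨ ((a :: p).map fun v => (c v : ℤ)).sum = c a := by
  induction p generalizing a with
  | nil => simp
  | cons b p ih =>
    obtain ⟨hab, hb⟩ := List.isChain_cons_cons.1 hc
    rw [List.map_cons, List.sum_cons]
    rcases ih hb with h | h <;> rw [h]
    · simp
    · simp [hab]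

theorem IsAlternatingOn.abs_sum_le_one {c : V → ℤˣ} {p : List V} (hc : IsAlternatingOn c p) :
    |(p.map fun v => (c v : ℤ)).sum| ≤ 1 := by
  cases p with
  | nil => exact zero_le_one
  | cons a p =>
    rcases hc.sum_cons with h | h <;> rw [h]
    · exact zero_le_one
    · exact (Int.isUnit_iff_abs_eq.1 (c a).isUnit).le

theorem exists_isAlternatingOn {p : List V} (hp : p.Nodup) : ∃ c, IsAlternatingOn c p := by
  classical
  refine ⟨fun v => (-1) ^ p.idxOf v, List.isChain_iff_getElem.2 fun i hi => ?_⟩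
  simp only [hp.idxOf_getElem, pow_succ, mul_neg_one]

theorem exists_abs_units_mul_add_le_one {a b : ℤ} (ha : |a| ≤ 1) (hb : |b| ≤ 1) :
    ∃ s : ℤˣ, |s * a + b| ≤ 1 := by
  rw [abs_le] at ha hb
  by_cases h : |a + b| ≤ 1
  · exact ⟨1, by simpa using h⟩
  · refine ⟨-1, ?_⟩
    rw [abs_le] at h ⊢
    push_cast
    omega

/-- An alternating colouring may be replaced by its opposite on each list separately, and a greedy
choice of the signs keeps the total balanced. -/
theorem exists_isAlternatingOn_abs_sum_le_one (ps : Multiset (List V))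
    (hps : (ps.map Multiset.ofList).join.Nodup) :
    ∃ c : V → ℤˣ, (∀ p ∈ ps, IsAlternatingOn c p) ∧
      |((ps.map Multiset.ofList).join.map fun v => (c v : ℤ)).sum| ≤ 1 := by
  classical
  induction ps using Multiset.induction_on with
  | empty => exact ⟨1, by simp⟩
  | cons p ps ih =>
    rw [Multiset.map_cons, Multiset.join_cons, Multiset.nodup_add] at hps
    obtain ⟨hp, hps, hdisj⟩ := hps
    obtain ⟨c, hc, hcsum⟩ := ih hps
    obtain ⟨d, hd⟩ := exists_isAlternatingOn (Multiset.coe_nodup.1 hp)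
    obtain ⟨s, hs⟩ := exists_abs_units_mul_add_le_one hd.abs_sum_le_one hcsum
    let e : V → ℤˣ := fun v => if v ∈ p then s * d v else c v
    have hed : ∀ v ∈ p, e v = s * d v := fun v hv => if_pos hv
    have hec : ∀ v ∈ (ps.map Multiset.ofList).join, e v = c v := fun v hv =>
      if_neg fun hvp => Multiset.disjoint_left.1 hdisj hvp hv
    refine ⟨e, fun q hq => ?_, ?_⟩
    · rcases Multiset.mem_cons.1 hq with rfl | hq
      · exact hd.congr s hed
      · refine (hc q hq).congr 1 fun v hv => ?_
        rw [one_mul, hec v (Multiset.mem_join.2 ⟨q, Multiset.mem_map_of_mem _ hq, hv⟩)]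
    · have hsum : (p.map fun v => (e v : ℤ)).sum = s * (p.map fun v => (d v : ℤ)).sum := by
        rw [← List.sum_map_mul_left, List.map_congr_left fun v hv => by
          rw [hed v hv, Units.val_mul]]
      rw [Multiset.map_cons, Multiset.join_cons, Multiset.map_add, Multiset.sum_add,
        Multiset.map_coe, Multiset.sum_coe, hsum,
        Multiset.map_congr rfl fun v hv => congrArg Units.val (hec v hv)]
      exact hs

end AlternatingColouring

/-! ### Traceable sets -/

section Traceable

variable {V : Type*} {G : SimpleGraph V}

/-- The multiset `X` is the vertex set of a path of `G`. Vertex sets are encoded as multisets, so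
that disjoint unions are sums; a path is a list of successively adjacent vertices, possibly
empty. -/
def IsTraceable (G : SimpleGraph V) (X : Multiset V) : Prop :=
  ∃ p : List V, p.IsChain G.Adj ∧ (p : Multiset V) = X

/-- The multiset `X` is the vertex set of a path of `G` that starts at `v`. -/
def IsTraceableFrom (G : SimpleGraph V) (v : V) (X : Multiset V) : Prop :=
  ∃ l : List V, (v :: l).IsChain G.Adj ∧ (↑(v :: l) : Multiset V) = X

theorem isChain_adj_reverse {p : List V} (hp : p.IsChain G.Adj) : p.reverse.IsChain G.Adj :=
  List.isChain_reverse.2 (hp.imp fun _ _ h => h.symm)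

theorem isTraceableFrom_head {p : List V} (hp : p.IsChain G.Adj) {x : V}
    (hx : p.head? = some x) : IsTraceableFrom G x p := by
  obtain ⟨l, rfl⟩ := List.head?_eq_some_iff.1 hx
  exact ⟨l, hp, rfl⟩

theorem isTraceableFrom_getLast {p : List V} (hp : p.IsChain G.Adj) {y : V}
    (hy : p.getLast? = some y) : IsTraceableFrom G y p := by
  rw [← Multiset.coe_reverse]
  exact isTraceableFrom_head (isChain_adj_reverse hp) (by rw [List.head?_reverse, hy])

theorem isTraceable_singleton (v : V) : IsTraceable G {v} :=
  ⟨[v], List.isChain_singleton v, rfl⟩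

namespace IsTraceableFrom

variable {u v : V} {X Y : Multiset V}

theorem isTraceable : IsTraceableFrom G v X → IsTraceable G X
  | ⟨l, hl, hX⟩ => ⟨v :: l, hl, hX⟩

theorem cons_of_adj (hX : IsTraceableFrom G v X) (huv : G.Adj u v) :
    IsTraceableFrom G u (u ::ₘ X) := by
  obtain ⟨l, hl, rfl⟩ := hX
  exact ⟨v :: l, hl.cons_cons huv, rfl⟩

theorem isTraceable_of_cons (hX : IsTraceableFrom G v (v ::ₘ X)) : IsTraceable G X := by
  obtain ⟨l, hl, hX⟩ := hX
  exact ⟨l, hl.tail, (Multiset.cons_inj_right v).1 hX⟩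

theorem isTraceable_add_of_cons (hX : IsTraceableFrom G v X)
    (hY : IsTraceableFrom G v (v ::ₘ Y)) : IsTraceable G (X + Y) := by
  obtain ⟨l, hl, rfl⟩ := hX
  obtain ⟨m, hm, hY⟩ := hY
  refine ⟨l.reverse ++ v :: m, List.isChain_split.2 ⟨?_, hm⟩, ?_⟩
  · rw [← List.reverse_cons]
    exact isChain_adj_reverse hl
  · rw [← Multiset.coe_add, hY, Multiset.coe_reverse, Multiset.add_cons, ← Multiset.cons_add]
    rfl

theorem isTraceable_add_of_adj (hX : IsTraceableFrom G u X) (hY : IsTraceableFrom G v Y)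
    (huv : G.Adj u v) : IsTraceable G (X + Y) :=
  hX.isTraceable_add_of_cons (hY.cons_of_adj huv)

end IsTraceableFrom

/-- The multiset `Q` is the vertex set of a path that consists of the vertex `q` between a path on
`A` and a path on `B`. -/
structure IsHinged (G : SimpleGraph V) (q : V) (A B Q : Multiset V) : Prop where
  eq_cons_add : Q = q ::ₘ (A + B)
  left : IsTraceableFrom G q (q ::ₘ A)
  right : IsTraceableFrom G q (q ::ₘ B)

namespace IsHinged

variable {q : V} {A B Q : Multiset V}

theorem symm (hQ : IsHinged G q A B Q) : IsHinged G q B A Q :=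
  ⟨by rw [hQ.eq_cons_add, add_comm], hQ.right, hQ.left⟩

theorem isTraceable (hQ : IsHinged G q A B Q) : IsTraceable G Q := by
  have h := hQ.left.isTraceable_add_of_cons hQ.right
  rwa [Multiset.cons_add, ← hQ.eq_cons_add] at h

end IsHinged

theorem IsTraceable.exists_isHinged {Q : Multiset V} (hQ : IsTraceable G Q) {q : V}
    (hq : q ∈ Q) : ∃ A B, IsHinged G q A B Q := by
  obtain ⟨p, hp, rfl⟩ := hQ
  obtain ⟨l, m, rfl⟩ := List.append_of_mem (Multiset.mem_coe.1 hq)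
  obtain ⟨hl, hm⟩ := List.isChain_split.1 hp
  refine ⟨l, m, ?_, ?_, ⟨m, hm, rfl⟩⟩
  · rw [← Multiset.coe_add, ← Multiset.cons_coe, Multiset.add_cons]
  · refine ⟨l.reverse, ?_, ?_⟩
    · rw [← List.reverse_concat]
      exact isChain_adj_reverse hl
    · rw [← Multiset.cons_coe, Multiset.coe_reverse]

end Traceable

/-! ### Bad vertex sets -/

section Bad

open scoped Finset

variable {V : Type*} {G : SimpleGraph V}

/-- A subcubic graph: every vertex has degree at most 3. -/
def IsSubcubic (G : SimpleGraph V) : Prop :=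
  ∀ v, (G.neighborSet v).encard ≤ 3

/-- A path whose alternating colourings cause no trouble at its ends: it has even length, or it is
not a single vertex of degree at least 3 and, if its ends `x` and `y` are adjacent, then all
neighbours of `x` other than `y` lie at odd positions of the path. Positions are counted from 0 at
`x`, so that such a neighbour and `x` have opposite colours. -/
def IsGoodPath (G : SimpleGraph V) (p : List V) : Prop :=
  Even p.length ∨ (∀ x, p = [x] → (G.neighborSet x).encard ≤ 2) ∧
    ∀ x y, p.head? = some x → p.getLast? = some y → G.Adj x y →
      ∀ w, G.Adj x w → w ≠ y → ∃ i : ℕ, Odd i ∧ p[i]? = some w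

/-- A traceable vertex set none of whose Hamiltonian paths is good. -/
def IsBad (G : SimpleGraph V) (X : Multiset V) : Prop :=
  IsTraceable G X ∧ ∀ p : List V, p.IsChain G.Adj → (p : Multiset V) = X → ¬ IsGoodPath G p

theorem eq_of_encard_le_three {α : Type*} {s : Set α} (hs : s.encard ≤ 3) {a b c d : α}
    (ha : a ∈ s) (hb : b ∈ s) (hab : a ≠ b) (hc : c ∈ s) (hd : d ∈ s) (hca : c ≠ a) (hcb : c ≠ b)
    (hda : d ≠ a) (hdb : d ≠ b) : c = d := by
  have hcard : ({a, b, c} : Set α).encard = 3 :=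
    Set.encard_eq_three.2 ⟨a, b, c, hab, hca.symm, hcb.symm, rfl⟩
  have hs_eq : {a, b, c} = s :=
    (Set.finite_of_encard_le_coe hs).eq_of_subset_of_encard_le' (by grind) (hs.trans hcard.ge)
  grind

theorem exists_odd_getElem?_cons_or_reverse {t : List V} (ht : Even t.length) {w : V}
    (hw : w ∈ t) (u : V) : (∃ i : ℕ, Odd i ∧ (u :: t)[i]? = some w) ∨
      ∃ i : ℕ, Odd i ∧ (u :: t.reverse)[i]? = some w := by
  obtain ⟨i, hi, rfl⟩ := List.getElem_of_mem hw
  by_cases hodd : Odd (i + 1)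
  · exact .inl ⟨i + 1, hodd, by simp [hi]⟩
  · refine .inr ⟨t.length - 1 - i + 1, by grind, ?_⟩
    rw [List.getElem?_cons_succ, List.getElem?_reverse (by lia), List.getElem?_eq_some_iff]
    exact ⟨by lia, by congr 1; lia⟩

namespace IsBad

variable {X : Multiset V}

theorem odd_card (hX : IsBad G X) : Odd X.card := by
  obtain ⟨⟨p, hp, rfl⟩, hbad⟩ := hX
  exact Nat.not_even_iff_odd.1 fun h => hbad p hp rfl (.inl h)

theorem two_lt_encard_neighborSet {u : V} (hu : IsBad G {u}) : 2 < (G.neighborSet u).encard := by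
  by_contra! hle
  refine hu.2 [u] (List.isChain_singleton u) rfl (.inr ⟨?_, ?_⟩)
  · rintro x ⟨⟩
    exact hle
  · rintro x y ⟨⟩ ⟨⟩ hadj
    exact absurd rfl hadj.ne

theorem exists_getLast?_adj {p : List V} (hp : p.IsChain G.Adj) (hbad : IsBad G p) {x : V}
    (hx : p.head? = some x) (hpx : p ≠ [x]) : ∃ y w, p.getLast? = some y ∧ G.Adj x y ∧
      G.Adj x w ∧ w ≠ y ∧ ∀ i : ℕ, Odd i → p[i]? ≠ some w := by
  have h := hbad.2 p hp rfl
  simp only [IsGoodPath, not_or, not_and] at h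
  have hsingle : ∀ z, p = [z] → (G.neighborSet z).encard ≤ 2 := by
    rintro z rfl
    exact absurd hx (by simpa using hpx)
  have hends := h.2 hsingle
  push Not at hends
  obtain ⟨z, y, hz, hy, hzy, w, hzw, hwy, hw⟩ := hends
  obtain rfl : x = z := Option.some_inj.1 (hx.symm.trans hz)
  exact ⟨y, w, hy, hzy, hzw, hwy, hw⟩

theorem isTraceableFrom (hX : IsBad G X) {u : V} (hu : u ∈ X) : IsTraceableFrom G u X := by
  obtain ⟨p, hp, rfl⟩ := hX.1
  obtain ⟨l, m, rfl⟩ := List.append_of_mem (Multiset.mem_coe.1 hu)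
  cases l with
  | nil => exact isTraceableFrom_head hp rfl
  | cons x l =>
    obtain ⟨y, w, hy, hxy, -⟩ := exists_getLast?_adj hp hX (x := x) rfl (by simp)
    obtain ⟨hl, hm, -⟩ := List.isChain_append.1 hp
    refine ⟨m ++ x :: l, ?_, Multiset.coe_eq_coe.2 (List.perm_append_comm (l₁ := u :: m))⟩
    rw [← List.cons_append]
    refine List.isChain_append.2 ⟨hm, hl, ?_⟩
    rintro a ha b ⟨⟩
    rw [List.getLast?_append, Option.mem_def.1 ha, Option.some_or, Option.some_inj] at hy
    exact hy ▸ hxy.symm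

/-- The path `u, f, …, l` is not good, so `u` is adjacent to `l` and to a third vertex `w` that is
at no odd position. Then `u, l, …, f` is a path as well, and the degree bound forces the same `w`.
-/
theorem exists_adj_forall_odd {u : V} {t : List V} (hu : (G.neighborSet u).encard ≤ 3)
    (ht : (u :: t).IsChain G.Adj) (hbad : IsBad G ↑(u :: t)) (hnodup : (u :: t).Nodup)
    (htnil : t ≠ []) : ∃ w, G.Adj u w ∧ (∀ i : ℕ, Odd i → (u :: t)[i]? ≠ some w) ∧
      ∀ i : ℕ, Odd i → (u :: t.reverse)[i]? ≠ some w := by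
  have hodd := hbad.odd_card
  obtain ⟨f, t, rfl⟩ := List.exists_cons_of_ne_nil htnil
  obtain rfl | ⟨m, l, rfl⟩ := t.eq_nil_or_concat'
  · exact absurd hodd (Nat.not_odd_iff_even.2 even_two)
  obtain ⟨l', w, hl', hul, huw, hwl, hw⟩ := exists_getLast?_adj ht hbad rfl (by simp)
  obtain rfl : l = l' :=
    Option.some_inj.1 ((List.getLast?_concat (l := u :: f :: m)).symm.trans hl')
  have hrev : (u :: (f :: (m ++ [l])).reverse).IsChain G.Adj := by
    simpa using ⟨hul, by simpa using isChain_adj_reverse ht.tail⟩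
  have hperm : (↑(u :: (f :: (m ++ [l])).reverse) : Multiset V) = ↑(u :: f :: (m ++ [l])) :=
    Multiset.coe_eq_coe.2 (List.Perm.cons u (List.reverse_perm _))
  obtain ⟨f', w', hf', huf, huw', hwf', hw'⟩ :=
    exists_getLast?_adj hrev (hperm ▸ hbad) rfl (by simp)
  rw [List.reverse_cons, ← List.cons_append, List.getLast?_concat, Option.some_inj] at hf'
  subst hf'
  have hfl : f ≠ l := by
    rintro rfl
    simp at hnodup
  obtain rfl : w = w' := by
    refine eq_of_encard_le_three hu huf hul hfl huw huw' ?_ hwl hwf' ?_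
    · rintro rfl
      exact hw 1 odd_one rfl
    · rintro rfl
      exact hw' 1 odd_one (by simp)
  exact ⟨w, huw, hw, hw'⟩

theorem exists_adj_notMem (hX : IsBad G X) (hnodup : X.Nodup) {u : V} (hu : u ∈ X)
    (hdeg : (G.neighborSet u).encard ≤ 3) : ∃ q, G.Adj u q ∧ q ∉ X := by
  obtain ⟨t, ht, rfl⟩ := hX.isTraceableFrom hu
  rcases eq_or_ne t [] with rfl | htnil
  · have hpos : 0 < (G.neighborSet u).encard := pos_of_gt hX.two_lt_encard_neighborSet
    obtain ⟨q, hq⟩ := Set.encard_pos.1 hpos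
    exact ⟨q, hq, by simpa using hq.ne'⟩
  · obtain ⟨w, huw, hw, hw'⟩ :=
      exists_adj_forall_odd hdeg ht hX (Multiset.coe_nodup.1 hnodup) htnil
    have heven : Even t.length := by simpa [Nat.odd_add_one] using hX.odd_card
    refine ⟨w, huw, fun hwX => ?_⟩
    have hwt : w ∈ t := (List.mem_cons.1 (Multiset.mem_coe.1 hwX)).resolve_left huw.ne'
    rcases exists_odd_getElem?_cons_or_reverse heven hwt u with ⟨i, hi, hwi⟩ | ⟨i, hi, hwi⟩
    · exact hw i hi hwi
    · exact hw' i hi hwi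

theorem three_le_sum_card (hG : IsSubcubic G) (hX : IsBad G X) (hnodup : X.Nodup)
    [DecidableRel G.Adj] {M : Finset V} (hM : ∀ u ∈ X, ∀ q, G.Adj u q → q ∉ X → q ∈ M) :
    3 ≤ (X.map fun u => #{q ∈ M | G.Adj u q}).sum := by
  by_cases hcard : X.card = 1
  · obtain ⟨u, rfl⟩ := Multiset.card_eq_one.1 hcard
    have hsub : G.neighborSet u ⊆ ↑{q ∈ M | G.Adj u q} := fun q hq => by
      simpa [hM u (Multiset.mem_singleton_self u) q hq (by simpa using hq.ne')] using hq
    have hlt := hX.two_lt_encard_neighborSet.trans_le (Set.encard_le_encard hsub)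
    rw [Set.encard_coe_eq_coe_finsetCard] at hlt
    rw [Multiset.map_singleton, Multiset.sum_singleton]
    exact_mod_cast hlt
  · have hpos : ∀ n ∈ X.map fun u => #{q ∈ M | G.Adj u q}, 1 ≤ n := by
      intro n hn
      obtain ⟨u, hu, rfl⟩ := Multiset.mem_map.1 hn
      obtain ⟨q, huq, hq⟩ := hX.exists_adj_notMem hnodup hu (hG u)
      exact Finset.card_pos.2 ⟨q, Finset.mem_filter.2 ⟨hM u hu q huq hq, huq⟩⟩
    have hodd := hX.odd_card
    calc 3 ≤ X.card := by grind
      _ ≤ _ := by simpa using Multiset.card_nsmul_le_sum hpos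

end IsBad

end Bad

/-! ### Optimal path partitions -/

section Optimal

variable {V : Type*} {G : SimpleGraph V}

open scoped Classical in
/-- The weight of a part of a path partition, minimised in total by optimal partitions. It satisfies
`3 < 2 + 2`, so that merging two parts pays off even if the result is bad. -/
noncomputable def weight (G : SimpleGraph V) (X : Multiset V) : ℕ :=
  if IsBad G X then 3 else 2

theorem weight_eq_three {X : Multiset V} (hX : IsBad G X) :
    weight G X = 3 :=
  if_pos hX

theorem weight_eq_two {X : Multiset V} (hX : ¬ IsBad G X) :
    weight G X = 2 :=
  if_neg hX

theorem weight_eq_two_of_even {X : Multiset V} (hX : Even X.card) : weight G X = 2 :=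
  weight_eq_two fun h => Nat.not_even_iff_odd.2 h.odd_card hX

theorem two_le_weight (G : SimpleGraph V) (X : Multiset V) : 2 ≤ weight G X := by
  unfold weight
  split <;> decide

theorem weight_le_three (G : SimpleGraph V) (X : Multiset V) : weight G X ≤ 3 := by
  unfold weight
  split <;> decide

variable [Fintype V]

/-- A partition of the vertex set into vertex sets of paths; empty paths are allowed. -/
def IsPathPartition (G : SimpleGraph V) (F : Multiset (Multiset V)) : Prop :=
  (∀ X ∈ F, IsTraceable G X) ∧ F.join = Finset.univ.val

/-- A path partition of minimum total weight. -/
def IsOptimal (G : SimpleGraph V) (F : Multiset (Multiset V)) : Prop :=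
  IsPathPartition G F ∧
    ∀ F', IsPathPartition G F' → (F.map (weight G)).sum ≤ (F'.map (weight G)).sum

theorem exists_isOptimal (G : SimpleGraph V) : ∃ F, IsOptimal G F := by
  have hpart : IsPathPartition G (Finset.univ.val.map fun v => {v}) := by
    refine ⟨fun X hX => ?_, (Multiset.bind_singleton _ id).trans (Multiset.map_id _)⟩
    obtain ⟨v, -, rfl⟩ := Multiset.mem_map.1 hX
    exact isTraceable_singleton v
  obtain ⟨F, hF, hmin⟩ := WellFounded.has_min (measure fun F => (F.map (weight G)).sum).wf
    {F | IsPathPartition G F} ⟨_, hpart⟩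
  exact ⟨F, hF, fun F' hF' => not_lt.1 (hmin F' hF')⟩

theorem IsPathPartition.nodup {F : Multiset (Multiset V)} {X : Multiset V}
    (hF : IsPathPartition G F) (hX : X ∈ F) : X.Nodup := by
  obtain ⟨R, rfl⟩ := Multiset.exists_cons_of_mem hX
  refine Multiset.nodup_of_le ?_ Finset.univ.nodup
  rw [← hF.2, Multiset.join_cons]
  exact Multiset.le_add_right _ _

namespace IsOptimal

variable {F R : Multiset (Multiset V)} {X Y Z W : Multiset V}

theorem isTraceable (hF : IsOptimal G F) (hX : X ∈ F) : IsTraceable G X :=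
  hF.1.1 X hX

theorem not_isTraceable_add (hF : IsOptimal G (X ::ₘ Y ::ₘ R)) : ¬ IsTraceable G (X + Y) := by
  intro hXY
  have hle := hF.2 ((X + Y) ::ₘ R)
    ⟨fun Z hZ => (Multiset.mem_cons.1 hZ).elim (fun h => h ▸ hXY) fun h =>
      hF.isTraceable (by simp [h]), by rw [← hF.1.2]; simp [add_assoc]⟩
  simp only [Multiset.map_cons, Multiset.sum_cons] at hle
  have hXle := two_le_weight G X
  have hYle := two_le_weight G Y
  have hXYle := weight_le_three G (X + Y)
  lia

theorem not_adj (hF : IsOptimal G (X ::ₘ Y ::ₘ R)) {x y : V} (hX : IsTraceableFrom G x X)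
    (hY : IsTraceableFrom G y Y) : ¬ G.Adj x y := fun h =>
  hF.not_isTraceable_add (hX.isTraceable_add_of_adj hY h)

theorem isPathPartition_exchange (hF : IsOptimal G (X ::ₘ Y ::ₘ R)) (hZ : IsTraceable G Z)
    (hW : IsTraceable G W) (hZW : Z + W = X + Y) : IsPathPartition G (Z ::ₘ W ::ₘ R) := by
  refine ⟨fun T hT => ?_, ?_⟩
  · rw [Multiset.mem_cons, Multiset.mem_cons] at hT
    rcases hT with rfl | rfl | hT
    · exact hZ
    · exact hW
    · exact hF.isTraceable (by simp [hT])
  · rw [← hF.1.2]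
    simp only [Multiset.join_cons, ← add_assoc, hZW]

theorem weight_add_weight_le (hF : IsOptimal G (X ::ₘ Y ::ₘ R)) (hZ : IsTraceable G Z)
    (hW : IsTraceable G W) (hZW : Z + W = X + Y) :
    weight G X + weight G Y ≤ weight G Z + weight G W := by
  have hle := hF.2 _ (hF.isPathPartition_exchange hZ hW hZW)
  simp only [Multiset.map_cons, Multiset.sum_cons] at hle
  lia

theorem exchange (hF : IsOptimal G (X ::ₘ Y ::ₘ R)) (hZ : IsTraceable G Z)
    (hW : IsTraceable G W) (hZW : Z + W = X + Y)
    (hle : weight G Z + weight G W ≤ weight G X + weight G Y) :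
    IsOptimal G (Z ::ₘ W ::ₘ R) := by
  refine ⟨hF.isPathPartition_exchange hZ hW hZW, fun F' hF' => ?_⟩
  have hle' := hF.2 F' hF'
  simp only [Multiset.map_cons, Multiset.sum_cons] at hle' ⊢
  lia

/-- Here `L` is reattached to the hinge `q` in the place of `B`. If the new part were bad, then it
would have a Hamiltonian path starting at `q`, and all of `L + Q` would be traceable. -/
theorem reattach {L Q A B : Multiset V} {u q : V} (hF : IsOptimal G (L ::ₘ Q ::ₘ R))
    (hL : IsBad G L) (hu : u ∈ L) (huq : G.Adj u q) (hQ : IsHinged G q A B Q) :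
    IsBad G B ∧ IsOptimal G ((q ::ₘ (A + L)) ::ₘ B ::ₘ R) := by
  set X := q ::ₘ (A + L) with hX
  have hXhinged : IsHinged G q A L X :=
    ⟨hX, hQ.left, (hL.isTraceableFrom hu).cons_of_adj huq.symm⟩
  have hB : IsTraceable G B := hQ.right.isTraceable_of_cons
  have hsum : X + B = L + Q := by
    rw [hX, hQ.eq_cons_add, Multiset.cons_add, Multiset.add_cons]
    congr 1
    abel
  have hXbad : ¬ IsBad G X := fun h => hF.not_isTraceable_add <| hsum ▸
    (h.isTraceableFrom (hX ▸ Multiset.mem_cons_self q _)).isTraceable_add_of_cons hQ.right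
  have hle := hF.weight_add_weight_le hXhinged.isTraceable hB hsum
  have hBle := weight_le_three G B
  have hQle := two_le_weight G Q
  rw [weight_eq_three hL, weight_eq_two hXbad] at hle
  refine ⟨by_contra fun h => ?_, hF.exchange hXhinged.isTraceable hB hsum ?_⟩
  · rw [weight_eq_two h] at hle
    lia
  · rw [weight_eq_three hL, weight_eq_two hXbad]
    lia

theorem not_adj_of_isHinged {L Q A B : Multiset V} {u q a : V} (hF : IsOptimal G (L ::ₘ Q ::ₘ R))
    (hQ : IsHinged G q A B Q) (hL : IsBad G L) (hA : IsBad G A) (hB : IsBad G B) (hu : u ∈ L)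
    (ha : a ∈ A) : ¬ G.Adj u a := by
  intro hua
  have hLA : IsTraceable G (L + A) :=
    (hL.isTraceableFrom hu).isTraceable_add_of_adj (hA.isTraceableFrom ha) hua
  have hsum : (L + A) + q ::ₘ B = L + Q := by
    rw [hQ.eq_cons_add, Multiset.add_cons, Multiset.add_cons, add_assoc]
  have hle := hF.weight_add_weight_le hLA hQ.right.isTraceable hsum
  have hLAeven : Even (L + A).card := by
    rw [Multiset.card_add]
    exact hL.odd_card.add_odd hA.odd_card
  have hqBeven : Even (q ::ₘ B).card := by
    rw [Multiset.card_cons]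
    exact hB.odd_card.add_one
  rw [weight_eq_three hL, weight_eq_two_of_even hLAeven, weight_eq_two_of_even hqBeven] at hle
  have hQle := two_le_weight G Q
  lia

end IsOptimal

end Optimal

/-! ### Alternating trees -/

section AlternatingTree

open scoped Finset

/-- Every element of `T` is the vertex set of a path that consists of a vertex of `M` between two
elements of `L`. -/
def IsJoined {V : Type*} (G : SimpleGraph V) (M : Finset V) (L T : Multiset (Multiset V)) : Prop :=
  ∀ Q ∈ T, ∃ A ∈ L, ∃ B ∈ L, ∃ q ∈ M, IsHinged G q A B Q

theorem IsJoined.cons {V : Type*} {G : SimpleGraph V} {M M' : Finset V}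
    {L L' T : Multiset (Multiset V)} {q : V} {A B Q : Multiset V} (hT : IsJoined G M L T)
    (hM : M ⊆ M') (hL : L ⊆ L') (hA : A ∈ L') (hB : B ∈ L') (hq : q ∈ M')
    (hQ : IsHinged G q A B Q) : IsJoined G M' L' (Q ::ₘ T) := by
  intro P hP
  rcases Multiset.mem_cons.1 hP with rfl | hP
  · exact ⟨A, hA, B, hB, q, hq, hQ⟩
  · obtain ⟨C, hC, D, hD, r, hr, h⟩ := hT P hP
    exact ⟨C, hL hC, D, hL hD, r, hM hr, h⟩

variable {V : Type*} [Fintype V] {G : SimpleGraph V}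

/-- The leaves `L` and the inner vertices `M` of a tree that is grown from a bad part of an optimal
partition, in analogy with the alternating trees of matching theory. Each inner vertex is the
hinge of a path between two leaves, and each leaf `X` occurs as a bad part of an optimal partition
in which all other leaves are joined in pairs by the inner vertices; `R` is the remainder of the
partition. -/
structure IsAlternatingTree (G : SimpleGraph V) (M : Finset V) (L R : Multiset (Multiset V)) :
    Prop where
  isBad : ∀ X ∈ L, IsBad G X
  card_eq : L.card = 2 * M.card + 1
  add_eq_univ : M.val + L.join + R.join = Finset.univ.val
  exists_isOptimal : ∀ X ∈ L, ∃ T, IsOptimal G (X ::ₘ (T + R)) ∧ IsJoined G M L T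

theorem IsOptimal.isAlternatingTree {X : Multiset V} {R : Multiset (Multiset V)}
    (hF : IsOptimal G (X ::ₘ R)) (hX : IsBad G X) : IsAlternatingTree G ∅ {X} R where
  isBad Y hY := Multiset.mem_singleton.1 hY ▸ hX
  card_eq := rfl
  add_eq_univ := by simpa using hF.1.2
  exists_isOptimal Y hY := ⟨0, by simpa [Multiset.mem_singleton.1 hY] using hF, by simp [IsJoined]⟩

namespace IsAlternatingTree

variable {M : Finset V} {L R : Multiset (Multiset V)}

theorem nodup {X : Multiset V} (h : IsAlternatingTree G M L R) (hX : X ∈ L) : X.Nodup := by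
  obtain ⟨T, hT, -⟩ := h.exists_isOptimal X hX
  exact hT.1.nodup (Multiset.mem_cons_self X _)

/-- Otherwise each leaf sends at least three edges to `M`, which is too many for `M`. -/
theorem exists_adj (hG : IsSubcubic G) (h : IsAlternatingTree G M L R) :
    ∃ X ∈ L, ∃ u ∈ X, ∃ q, G.Adj u q ∧ q ∉ X ∧ q ∉ M := by
  classical
  by_contra! hM
  have hleaf : ∀ X ∈ L, 3 ≤ (X.map fun u => #{q ∈ M | G.Adj u q}).sum := fun X hX =>
    (h.isBad X hX).three_le_sum_card hG (h.nodup hX) fun u hu q huq hq => hM X hX u hu q huq hq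
  have hinner : ∀ q ∈ M, #{u | G.Adj u q} ≤ 3 := fun q _ => by
    have hsub : (({u | G.Adj u q} : Finset V) : Set V) ⊆ G.neighborSet q :=
      fun u hu => (Finset.mem_filter.1 hu).2.symm
    have hle := (Set.encard_le_encard hsub).trans (hG q)
    rw [Set.encard_coe_eq_coe_finsetCard] at hle
    exact_mod_cast hle
  have hle : L.card * 3 ≤ M.card * 3 :=
    calc L.card * 3 ≤ (L.map fun X => (X.map fun u => #{q ∈ M | G.Adj u q}).sum).sum := by
          rw [← smul_eq_mul, ← Multiset.card_map]
          exact Multiset.card_nsmul_le_sum (Multiset.forall_mem_map_iff.2 hleaf)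
      _ = (L.join.map fun u => #{q ∈ M | G.Adj u q}).sum := by
          rw [Multiset.map_join, Multiset.sum_join, Multiset.map_map]; rfl
      _ ≤ ∑ u, #{q ∈ M | G.Adj u q} := by
          rw [Finset.sum_eq_multiset_sum, ← h.add_eq_univ, Multiset.map_add, Multiset.map_add,
            Multiset.sum_add, Multiset.sum_add]
          exact le_add_right (Nat.le_add_left _ _)
      _ = ∑ q ∈ M, #{u | G.Adj u q} :=
          Finset.sum_card_bipartiteAbove_eq_sum_card_bipartiteBelow G.Adj
      _ ≤ M.card * 3 := Finset.sum_le_card_nsmul _ _ _ hinner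
  have hcard := h.card_eq
  lia

theorem notMem_part {X Q : Multiset V} {u q : V} (h : IsAlternatingTree G M L R)
    {T : Multiset (Multiset V)} (hX : X ∈ L) (hopt : IsOptimal G (X ::ₘ (T + R)))
    (hT : IsJoined G M L T) (hQ : Q ∈ T)
    (hu : u ∈ X) (huq : G.Adj u q) (hq : q ∉ M) : q ∉ Q := by
  obtain ⟨A, hA, B, hB, m, hm, hhinge⟩ := hT Q hQ
  obtain ⟨T', rfl⟩ := Multiset.exists_cons_of_mem hQ
  rw [Multiset.cons_add] at hopt
  rw [hhinge.eq_cons_add, Multiset.mem_cons, Multiset.mem_add]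
  rintro (rfl | hqA | hqB)
  · exact hq hm
  · exact hopt.not_adj_of_isHinged hhinge (h.isBad X hX) (h.isBad A hA) (h.isBad B hB) hu hqA huq
  · exact hopt.not_adj_of_isHinged hhinge.symm (h.isBad X hX) (h.isBad B hB) (h.isBad A hA) hu hqB
      huq

theorem extend {X Q A B : Multiset V} {u q : V}
    (h : IsAlternatingTree G M L (Q ::ₘ R)) (hX : X ∈ L) (hu : u ∈ X) (huq : G.Adj u q)
    (hq : q ∉ M) (hQ : IsHinged G q A B Q) :
    IsAlternatingTree G (Finset.cons q M hq) (A ::ₘ B ::ₘ L) R := by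
  obtain ⟨T, hopt, hT⟩ := h.exists_isOptimal X hX
  rw [Multiset.add_cons] at hopt
  obtain ⟨hB, hoptB⟩ := hopt.reattach (h.isBad X hX) hu huq hQ
  obtain ⟨hA, hoptA⟩ := hopt.reattach (h.isBad X hX) hu huq hQ.symm
  have hXq : IsTraceableFrom G q (q ::ₘ X) :=
    ((h.isBad X hX).isTraceableFrom hu).cons_of_adj huq.symm
  have hA' : A ∈ A ::ₘ B ::ₘ L := Multiset.mem_cons_self A _
  have hB' : B ∈ A ::ₘ B ::ₘ L := Multiset.mem_cons_of_mem (Multiset.mem_cons_self B L)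
  have hL' : L ⊆ A ::ₘ B ::ₘ L := fun Y hY =>
    Multiset.mem_cons_of_mem (Multiset.mem_cons_of_mem hY)
  have hM' : M ⊆ Finset.cons q M hq := Finset.subset_cons hq
  have hq' : q ∈ Finset.cons q M hq := Finset.mem_cons_self q M
  refine ⟨?_, ?_, ?_, ?_⟩
  · exact Multiset.forall_mem_cons.2 ⟨hA, Multiset.forall_mem_cons.2 ⟨hB, h.isBad⟩⟩
  · rw [Multiset.card_cons, Multiset.card_cons, h.card_eq, Finset.card_cons]
    ring
  · rw [← h.add_eq_univ]
    simp only [Finset.cons_val, Multiset.join_cons, hQ.eq_cons_add]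
    simp only [← Multiset.singleton_add]
    abel
  · refine Multiset.forall_mem_cons.2 ⟨?_, Multiset.forall_mem_cons.2 ⟨?_, fun Y hY => ?_⟩⟩
    · rw [Multiset.cons_swap, ← Multiset.cons_add] at hoptA
      exact ⟨_, hoptA, hT.cons hM' hL' hB' (hL' hX) hq' ⟨rfl, hQ.right, hXq⟩⟩
    · rw [Multiset.cons_swap, ← Multiset.cons_add] at hoptB
      exact ⟨_, hoptB, hT.cons hM' hL' hA' (hL' hX) hq' ⟨rfl, hQ.left, hXq⟩⟩
    · obtain ⟨S, hoptS, hS⟩ := h.exists_isOptimal Y hY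
      rw [Multiset.add_cons, ← Multiset.cons_add] at hoptS
      exact ⟨_, hoptS, hS.cons hM' hL' hA' hB' hq' hQ⟩

theorem exists_extension (hG : IsSubcubic G) (h : IsAlternatingTree G M L R) :
    ∃ M' L' R', R'.card < R.card ∧ IsAlternatingTree G M' L' R' := by
  obtain ⟨X, hX, u, hu, q, huq, hqX, hqM⟩ := h.exists_adj hG
  obtain ⟨T, hopt, hT⟩ := h.exists_isOptimal X hX
  obtain ⟨Q, hQ, hqQ⟩ : ∃ Q ∈ X ::ₘ (T + R), q ∈ Q := by
    rw [← Multiset.mem_join, hopt.1.2]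
    exact Finset.mem_univ_val q
  obtain ⟨A, B, hhinge⟩ := (hopt.isTraceable hQ).exists_isHinged hqQ
  rw [Multiset.mem_cons, Multiset.mem_add] at hQ
  rcases hQ with rfl | hQT | hQR
  · exact absurd hqQ hqX
  · exact absurd hqQ (h.notMem_part hX hopt hT hQT hu huq hqM)
  · obtain ⟨R', rfl⟩ := Multiset.exists_cons_of_mem hQR
    exact ⟨_, _, R', by simp, h.extend hX hu huq hqM hhinge⟩

end IsAlternatingTree

theorem not_isAlternatingTree (hG : IsSubcubic G) (M : Finset V) (L R : Multiset (Multiset V)) :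
    ¬ IsAlternatingTree G M L R := by
  induction hn : R.card using Nat.strong_induction_on generalizing M L R with
  | _ n ih =>
    intro h
    obtain ⟨M', L', R', hlt, h'⟩ := h.exists_extension hG
    exact ih _ (hn ▸ hlt) M' L' R' rfl h'

theorem IsOptimal.not_isBad (hG : IsSubcubic G) {F : Multiset (Multiset V)} (hF : IsOptimal G F)
    {X : Multiset V} (hX : X ∈ F) : ¬ IsBad G X := by
  obtain ⟨R, rfl⟩ := Multiset.exists_cons_of_mem hX
  exact fun h => not_isAlternatingTree hG _ _ _ (hF.isAlternatingTree h)

end AlternatingTree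

/-! ### Colouring an optimal partition -/

section Colouring

variable {V : Type*} {G : SimpleGraph V} {c : V → ℤˣ} {p : List V} {v : V}

/-- The neighbours of `v` that have the same colour as `v` under the colouring `c`. -/
def monoNeighborSet (G : SimpleGraph V) (c : V → ℤˣ) (v : V) : Set V :=
  {w | G.Adj v w ∧ c w = c v}

theorem monoOK_setOf_eq (hdeg : ∀ v, (monoNeighborSet G c v).encard ≤ 2)
    (hstar : ∀ x y, G.Adj x y → c x = c y →
      (monoNeighborSet G c x).Subsingleton ∨ (monoNeighborSet G c y).Subsingleton) (s : ℤˣ) :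
    MonoOK G 3 {v | c v = s} := by
  have hinter : ∀ v ∈ {v | c v = s}, G.neighborSet v ∩ {v | c v = s} = monoNeighborSet G c v := by
    rintro v rfl
    rfl
  refine monoOK_of_neighborSet_inter (m := 2) (fun v hv => ?_) fun x hx y hy hxy => ?_
  · rw [hinter v hv]
    exact hdeg v
  · rw [hinter x hx, hinter y hy]
    exact hstar x y hxy (hx.trans hy.symm)

theorem notMem_monoNeighborSet {w : V} (hw : c w = -c v) : w ∉ monoNeighborSet G c v :=
  fun h => units_ne_neg_self (c v) (h.2.symm.trans hw)

theorem encard_sdiff_singleton_le {α : Type*} {s : Set α} {a : α} {n : ℕ∞} (ha : a ∈ s)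
    (hs : s.encard ≤ n + 1) : (s \ {a}).encard ≤ n := by
  rw [← Set.encard_sdiff_singleton_add_one ha] at hs
  exact (ENat.add_le_add_iff_right ENat.one_ne_top).1 hs

theorem eq_singleton_or_exists_adj (hp : p.IsChain G.Adj) (hc : IsAlternatingOn c p)
    (hv : v ∈ p) : p = [v] ∨ ∃ w, G.Adj v w ∧ c w = -c v := by
  obtain ⟨l, m, rfl⟩ := List.append_of_mem hv
  obtain rfl | ⟨l, a, rfl⟩ := l.eq_nil_or_concat'
  · rcases m with _ | ⟨b, m⟩
    · exact .inl rfl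
    · exact .inr ⟨b, hp.rel, (show List.IsChain _ _ from hc).rel⟩
  · have hinfix : [a, v] <:+: l ++ [a] ++ v :: m := ⟨l, m, by simp⟩
    have hav : c v = -c a := (List.IsChain.infix hc hinfix).rel (R := fun a b => c b = -c a)
    exact .inr ⟨a, (hp.infix hinfix).rel.symm, by rw [hav, neg_neg]⟩

theorem head?_or_getLast?_or_exists_infix {α : Type*} {p : List α} {v : α} (hv : v ∈ p) :
    p.head? = some v ∨ p.getLast? = some v ∨ ∃ a b, [a, v, b] <:+: p := by
  obtain ⟨l, m, rfl⟩ := List.append_of_mem hv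
  obtain rfl | ⟨l, a, rfl⟩ := l.eq_nil_or_concat'
  · exact .inl rfl
  · rcases m with _ | ⟨b, m⟩
    · exact .inr (.inl List.getLast?_concat)
    · exact .inr (.inr ⟨a, b, l, m, by simp⟩)

theorem encard_monoNeighborSet_le_two (hdeg : (G.neighborSet v).encard ≤ 3) (hp : p.IsChain G.Adj)
    (hgood : IsGoodPath G p) (hc : IsAlternatingOn c p) (hv : v ∈ p) :
    (monoNeighborSet G c v).encard ≤ 2 := by
  rcases eq_singleton_or_exists_adj hp hc hv with rfl | ⟨w, hvw, hw⟩
  · have hle : (G.neighborSet v).encard ≤ 2 :=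
      (hgood.resolve_left Nat.not_even_one).1 v rfl
    exact (Set.encard_le_encard fun w hw => hw.1).trans hle
  · have hsub : monoNeighborSet G c v ⊆ G.neighborSet v \ {w} := fun z hz =>
      ⟨hz.1, fun h => notMem_monoNeighborSet hw (h ▸ hz)⟩
    exact (Set.encard_le_encard hsub).trans (encard_sdiff_singleton_le hvw hdeg)

theorem head?_or_getLast?_of_not_subsingleton (hdeg : (G.neighborSet v).encard ≤ 3)
    (hp : p.IsChain G.Adj) (hnodup : p.Nodup) (hc : IsAlternatingOn c p) (hv : v ∈ p)
    (hmono : ¬ (monoNeighborSet G c v).Subsingleton) :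
    p.head? = some v ∨ p.getLast? = some v := by
  rcases head?_or_getLast?_or_exists_infix hv with h | h | ⟨a, b, hinfix⟩
  · exact .inl h
  · exact .inr h
  · obtain ⟨hav, hvb⟩ : G.Adj a v ∧ G.Adj v b := by simpa using hp.infix hinfix
    obtain ⟨hcv, hcb⟩ : c v = -c a ∧ c b = -c v := by
      simpa using List.IsChain.infix hc hinfix
    have hca : c a = -c v := by rw [hcv, neg_neg]
    have hab : b ≠ a := by
      have hnodup' := hnodup.sublist hinfix.sublist
      grind
    have hle : ((G.neighborSet v \ {a}) \ {b}).encard ≤ 1 :=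
      encard_sdiff_singleton_le ⟨hvb, hab⟩ (encard_sdiff_singleton_le hav.symm hdeg)
    have hsub : monoNeighborSet G c v ⊆ (G.neighborSet v \ {a}) \ {b} := fun z hz =>
      ⟨⟨hz.1, fun h => notMem_monoNeighborSet hca (h ▸ hz)⟩,
        fun h => notMem_monoNeighborSet hcb (h ▸ hz)⟩
    exact absurd ((Set.encard_le_one_iff_subsingleton.1 hle).anti hsub) hmono

theorem subsingleton_monoNeighborSet_head (hgood : IsGoodPath G p) (hc : IsAlternatingOn c p)
    {x y : V} (hx : p.head? = some x) (hy : p.getLast? = some y) (hxy : G.Adj x y)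
    (hcxy : c x = c y) : (monoNeighborSet G c x).Subsingleton := by
  have hopp {w : V} {i : ℕ} (hi : Odd i) (hw : p[i]? = some w) : c w ≠ c x := by
    rw [hc.eq_neg_of_odd hx hi hw]
    exact (units_ne_neg_self _).symm
  rcases hgood with heven | ⟨-, hends⟩
  · rw [List.getLast?_eq_getElem?] at hy
    have hodd : Odd (p.length - 1) := by grind
    exact absurd hcxy.symm (hopp hodd hy)
  · suffices h : ∀ w ∈ monoNeighborSet G c x, w = y from
      fun w hw z hz => (h w hw).trans (h z hz).symm
    rintro w ⟨hxw, hw⟩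
    by_contra hwy
    obtain ⟨i, hi, hwi⟩ := hends x y hx hy hxy w hxw hwy
    exact hopp hi hwi hw

variable [Fintype V]

theorem IsOptimal.eq_of_adj {F : Multiset (Multiset V)} (hF : IsOptimal G F) {X Y : Multiset V}
    (hX : X ∈ F) (hY : Y ∈ F) {x y : V} (hxX : IsTraceableFrom G x X) (hyY : IsTraceableFrom G y Y)
    (hxy : G.Adj x y) : X = Y := by
  by_contra hne
  obtain ⟨R, rfl⟩ := Multiset.exists_cons_of_mem hX
  obtain ⟨R, rfl⟩ := Multiset.exists_cons_of_mem
    ((Multiset.mem_cons.1 hY).resolve_left (Ne.symm hne))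
  exact hF.not_adj hxX hyY hxy

theorem IsOptimal.subsingleton_monoNeighborSet_or {F : Multiset (Multiset V)} (hG : IsSubcubic G)
    (hF : IsOptimal G F) {f : Multiset V → List V}
    (hf : ∀ X ∈ F, (f X).IsChain G.Adj ∧ (f X : Multiset V) = X ∧ IsGoodPath G (f X))
    (hc : ∀ X ∈ F, IsAlternatingOn c (f X)) {x y : V} (hxy : G.Adj x y) (hcxy : c x = c y) :
    (monoNeighborSet G c x).Subsingleton ∨ (monoNeighborSet G c y).Subsingleton := by
  by_contra! hmono
  have hends {v : V} (hv : ¬ (monoNeighborSet G c v).Subsingleton) : ∃ X ∈ F,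
      IsTraceableFrom G v X ∧ ((f X).head? = some v ∨ (f X).getLast? = some v) := by
    obtain ⟨X, hX, hvX⟩ := Multiset.mem_join.1 (hF.1.2 ▸ Finset.mem_univ_val v)
    obtain ⟨hchain, hfX, -⟩ := hf X hX
    have hnodup : (f X).Nodup := by
      rw [← Multiset.coe_nodup, hfX]
      exact hF.1.nodup hX
    have hvf : v ∈ f X := by rwa [← hfX] at hvX
    have hend := head?_or_getLast?_of_not_subsingleton (hG v) hchain hnodup (hc X hX) hvf hv
    refine ⟨X, hX, ?_, hend⟩
    rw [← hfX]
    exact hend.elim (isTraceableFrom_head hchain) (isTraceableFrom_getLast hchain)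
  obtain ⟨X, hX, hxX, hxend⟩ := hends (Set.not_subsingleton_iff.2 hmono.1)
  obtain ⟨Y, hY, hyY, hyend⟩ := hends (Set.not_subsingleton_iff.2 hmono.2)
  obtain rfl := hF.eq_of_adj hX hY hxX hyY hxy
  have hgood := (hf X hX).2.2
  rcases hxend with hx | hx <;> rcases hyend with hy | hy
  · exact hxy.ne (Option.some_inj.1 (hx.symm.trans hy))
  · exact Set.not_subsingleton_iff.2 hmono.1
      (subsingleton_monoNeighborSet_head hgood (hc X hX) hx hy hxy hcxy)
  · exact Set.not_subsingleton_iff.2 hmono.2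
      (subsingleton_monoNeighborSet_head hgood (hc X hX) hy hx hxy.symm hcxy.symm)
  · exact hxy.ne (Option.some_inj.1 (hx.symm.trans hy))

theorem IsSubcubic.exists_balanced_monoOK (hG : IsSubcubic G) :
    ∃ c : V → ℤˣ, |∑ v, (c v : ℤ)| ≤ 1 ∧ ∀ s, MonoOK G 3 {v | c v = s} := by
  obtain ⟨F, hF⟩ := exists_isOptimal G
  have hpath : ∀ X ∈ F, ∃ p : List V,
      p.IsChain G.Adj ∧ (p : Multiset V) = X ∧ IsGoodPath G p := fun X hX => by
    by_contra! h
    exact hF.not_isBad hG hX ⟨hF.isTraceable hX, h⟩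
  choose! f hf using hpath
  have hfF : (F.map f).map Multiset.ofList = F :=
    (Multiset.map_map _ _ _).trans
      ((Multiset.map_congr rfl fun X hX => (hf X hX).2.1).trans (Multiset.map_id F))
  obtain ⟨c, hc, hsum⟩ := exists_isAlternatingOn_abs_sum_le_one (F.map f)
    (by rw [hfF, hF.1.2]; exact Finset.univ.nodup)
  rw [hfF, hF.1.2] at hsum
  have hcF : ∀ X ∈ F, IsAlternatingOn c (f X) := fun X hX => hc _ (Multiset.mem_map_of_mem f hX)
  refine ⟨c, hsum, monoOK_setOf_eq (fun v => ?_) fun x y hxy hcxy =>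
    hF.subsingleton_monoNeighborSet_or hG hf hcF hxy hcxy⟩
  obtain ⟨X, hX, hvX⟩ := Multiset.mem_join.1 (hF.1.2 ▸ Finset.mem_univ_val v)
  obtain ⟨hchain, hfX, hgood⟩ := hf X hX
  rw [← hfX, Multiset.mem_coe] at hvX
  exact encard_monoNeighborSet_le_two (hG v) hchain hgood (hcF X hX) hvX

end Colouring

theorem card_setOf_eq_one_eq_card_compl {V : Type*} [Fintype V] (hV : Even (Nat.card V))
    {c : V → ℤˣ} (hc : |∑ v, (c v : ℤ)| ≤ 1) :
    Nat.card {v | c v = 1} = Nat.card ({v | c v = 1}ᶜ : Set V) := by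
  classical
  have hsum : ∑ v, (c v : ℤ) = Nat.card {v | c v = 1} - Nat.card ({v | c v = 1}ᶜ : Set V) := by
    have hite : ∀ v, (c v : ℤ) = if c v = 1 then 1 else -1 := fun v => by
      rcases Int.units_eq_one_or (c v) with h | h <;> rw [h] <;> rfl
    rw [Finset.sum_congr rfl fun v _ => hite v, Finset.sum_ite, Set.compl_ofPred]
    simp [Fintype.card_subtype, sub_eq_add_neg]
  have hcard : Nat.card {v | c v = 1} + Nat.card ({v | c v = 1}ᶜ : Set V) = Nat.card V :=
    Set.ncard_add_ncard_compl _
  rw [hsum, abs_le] at hc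
  grind

theorem IsCubic.isSubcubic {V : Type*} [Fintype V] {G : SimpleGraph V} (hG : IsCubic G) :
    IsSubcubic G := fun v =>
  (Set.encard_le_coe_iff_finite_ncard_le (k := 3)).2 ⟨Set.toFinite _, (hG v).le⟩

theorem IsCubic.even_card {V : Type*} [Fintype V] {G : SimpleGraph V} (hG : IsCubic G) :
    Even (Nat.card V) := by
  classical
  have hdeg : ∀ v, G.degree v = 3 := fun v => by
    rw [← hG v, Nat.card_eq_fintype_card, card_neighborSet_eq_degree]
  have h := G.sum_degrees_eq_twice_card_edges
  rw [Finset.sum_congr rfl fun v _ => hdeg v, Finset.sum_const, Finset.card_univ,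
    ← Nat.card_eq_fintype_card, smul_eq_mul] at h
  grind

theorem stmt15_general {V : Type*} [Fintype V] (G : SimpleGraph V) (hG : IsSubcubic G)
    (hV : Even (Nat.card V)) : ∃ S : Set V, IsWeakBisection G 5 S := by
  obtain ⟨c, hsum, hmono⟩ := hG.exists_balanced_monoOK
  have hcompl : {v | c v = 1}ᶜ = {v | c v = -1} := by
    ext v
    exact Int.units_ne_iff_eq_neg
  exact ⟨{v | c v = 1}, card_setOf_eq_one_eq_card_compl hV hsum, hmono 1, hcompl ▸ hmono (-1)⟩

/-- Every cubic graph admits a 5-weak bisection. -/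
theorem stmt15 {V : Type*} [Fintype V] (G : SimpleGraph V) (hG : IsCubic G) :
    ∃ S : Set V, IsWeakBisection G 5 S :=
  stmt15_general G hG.isSubcubic hG.even_card
end

section
/- Let G be a cubic graph with a perfect matching M, and suppose the 2-factor T = E(G) \ M has exactly s odd cycle components (s is the oddness of this 2-factor). Then G admits a 5-weak bisection in which the number of monochromatic paths on 3 vertices is at most s. -/
open SimpleGraph

/-!
Encode a matching as the involution exchanging the ends of its edges. The factor `T` has maximum
degree two, hence is claw-free, and by Sumner's theorem it has a matching `n` leaving at most one
vertex unmatched in each component, necessarily only in odd components: if two unmatched vertices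
`u`, `v` of a maximum matching are joined by a walk `u, p, q, …`, then claw-freeness at `p`, applied
to `u`, `q` and the partner of `p`, allows one to move the unmatched vertex `u` closer to `v`, until
the two are adjacent and could be matched with each other.

The union of the matchings `M` and `n` is bipartite. Instead of following its alternating cycles,
re-pair `M` so that it agrees with `n` at one more vertex; a bipartition for the new pair of
matchings turns into one for the old pair after exchanging the colours of the ends of at most one
edge of `n`.

Every edge of `M` and of `n` is then bichromatic, so the colour classes have equal size, and inside
a colour class a vertex matched by `n` has degree at most one. The monochromatic components are
therefore stars with at most two leaves, and each component with three vertices contains an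
`n`-unmatched vertex, of which there is at most one per odd component of `T`.
-/

section Rematch

variable {V : Type*} [DecidableEq V] {σ : Equiv.Perm V} {a b : V}

/-- Re-pairing of an involution `σ`: after conjugation by the transposition of `b` and `σ a`, the
points `a` and `b` are exchanged, and so are their former partners `σ a` and `σ b` (if `b` was
fixed, then `σ a` becomes fixed). It serves both to make `σ` agree with a second involution at `a`
and to move the unmatched vertices of a matching. -/
def rematch (σ : Equiv.Perm V) (a b : V) : Equiv.Perm V :=
  Equiv.swap b (σ a) * σ * (Equiv.swap b (σ a))⁻¹

theorem rematch_apply (σ : Equiv.Perm V) (a b v : V) :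
    rematch σ a b v = Equiv.swap b (σ a) (σ (Equiv.swap b (σ a) v)) :=
  rfl

theorem card_support_rematch [Fintype V] (σ : Equiv.Perm V) (a b : V) :
    (rematch σ a b).support.card = σ.support.card :=
  Equiv.Perm.card_support_conj

theorem rematch_involutive (hσ : Function.Involutive σ) :
    Function.Involutive (rematch σ a b) := fun v => by
  simp only [rematch_apply, Equiv.swap_apply_self, hσ (Equiv.swap b (σ a) v)]

theorem rematch_apply_left (hab : a ≠ b) (ha : σ a ≠ a) : rematch σ a b a = b := by
  rw [rematch_apply, Equiv.swap_apply_of_ne_of_ne hab ha.symm, Equiv.swap_apply_right]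

theorem rematch_apply_right (hσ : Function.Involutive σ) (hab : a ≠ b) (ha : σ a ≠ a) :
    rematch σ a b b = a := by
  rw [rematch_apply, Equiv.swap_apply_left, hσ a, Equiv.swap_apply_of_ne_of_ne hab ha.symm]

theorem rematch_apply_partner_of_fixed (hb : σ b = b) : rematch σ a b (σ a) = σ a := by
  rw [rematch_apply, Equiv.swap_apply_right, hb, Equiv.swap_apply_left]

theorem rematch_apply_partner (hσ : Function.Involutive σ) (hab : a ≠ b) (hb : σ b ≠ b) :
    rematch σ a b (σ a) = σ b := by
  rw [rematch_apply, Equiv.swap_apply_right,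
    Equiv.swap_apply_of_ne_of_ne hb (hσ.injective.ne hab.symm)]

theorem rematch_apply_of_ne (hσ : Function.Involutive σ) {v : V} (ha : v ≠ a) (hb : v ≠ b)
    (hσa : v ≠ σ a) (hσb : v ≠ σ b) : rematch σ a b v = σ v := by
  rw [rematch_apply, Equiv.swap_apply_of_ne_of_ne hb hσa,
    Equiv.swap_apply_of_ne_of_ne (fun h => hσb (by rw [← h, hσ v])) (hσ.injective.ne ha)]

end Rematch

section Halves

variable {V : Type*} {f : V → V} {σ τ : Equiv.Perm V} {S : Set V}

/-- `S` contains exactly one point of every 2-cycle of the involution `f`, so that `S` and `Sᶜ`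
properly colour the matching encoded by `f`; the fixed points of `f` are unconstrained. -/
def IsHalf (f : V → V) (S : Set V) : Prop :=
  ∀ v, f v ≠ v → (f v ∈ S ↔ v ∉ S)

theorem IsHalf.compl (h : IsHalf f S) : IsHalf f Sᶜ := fun v hv =>
  not_congr (h v hv)

theorem IsHalf.apply_notMem (h : IsHalf f S) {v : V} (hv : v ∈ S) (hfv : f v ≠ v) : f v ∉ S :=
  fun hmem => (h v hfv).1 hmem hv

theorem IsHalf.natCard_eq_natCard_compl (h : IsHalf σ S) (hσ : ∀ v, σ v ≠ v) :
    Nat.card S = Nat.card (Sᶜ : Set V) :=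
  Nat.card_congr <| σ.subtypeEquiv fun v => by
    rw [Set.mem_compl_iff, h v (hσ v), not_not]

theorem exists_isHalf (hf : Function.Involutive f) : ∃ S, IsHalf f S := by
  classical
  let := linearOrderOfSTO (WellOrderingRel : V → V → Prop)
  refine ⟨{v | v < f v}, fun v hv => ?_⟩
  simp only [Set.mem_ofPred_eq, hf v, not_lt]
  exact ⟨le_of_lt, fun h => lt_of_le_of_ne h hv⟩

theorem exists_isHalf_isHalf_of_compatible (hσ : Function.Involutive σ)
    (hτ : Function.Involutive τ) (h : ∀ v, σ v = v ∨ τ v = v ∨ σ v = τ v) :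
    ∃ S, IsHalf σ S ∧ IsHalf τ S := by
  classical
  let ρ : V → V := fun v => if σ v = v then τ v else σ v
  have hρ : Function.Involutive ρ := fun v => by grind [Function.Involutive]
  obtain ⟨S, hS⟩ := exists_isHalf hρ
  exact ⟨S, fun v hv => by grind [IsHalf], fun v hv => by grind [IsHalf]⟩

theorem IsHalf.symmDiff (h : IsHalf f S) {A : Set V} (hA : ∀ v, f v ∈ A ↔ v ∈ A) :
    IsHalf f (symmDiff S A) := fun v hv => by
  simp only [Set.mem_symmDiff, hA, h v hv]
  tauto

theorem IsHalf.of_rematch [DecidableEq V] {a b : V} (hσ : Function.Involutive σ) (hab : a ≠ b)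
    (hσa : σ a ≠ a) (h : IsHalf (rematch σ a b) S) (ha : σ a ∈ S ↔ a ∉ S) : IsHalf σ S := by
  have hb : b ∈ S ↔ a ∉ S := by
    simpa only [rematch_apply_left hab hσa, hab.symm, ne_eq, not_false_eq_true, true_imp_iff]
      using h a
  have hσb (hb' : σ b ≠ b) : σ b ∈ S ↔ σ a ∉ S := by
    simpa only [rematch_apply_partner hσ hab hb', ne_eq, hσ.injective.eq_iff, hab.symm,
      not_false_eq_true, true_imp_iff] using h (σ a)
  intro v hv
  by_cases hva : v = a
  · rwa [hva]
  by_cases hvb : v = b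
  · rw [hvb] at hv ⊢
    rw [hσb hv, ha, hb]
  by_cases hvσa : v = σ a
  · rw [hvσa, hσ a, ha, not_not]
  by_cases hvσb : v = σ b
  · rw [hvσb, hσ b] at hv ⊢
    rw [hσb hv.symm, ha, hb, not_not]
  have hv' := rematch_apply_of_ne hσ hva hvb hvσa hvσb
  simpa only [hv'] using h v (by rwa [hv'])

theorem exists_isHalf_isHalf_of_rematch [DecidableEq V] {a : V} (hσ : Function.Involutive σ)
    (hτ : Function.Involutive τ) (hσa : σ a ≠ a) (hτa : τ a ≠ a) (hne : σ a ≠ τ a)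
    (h : ∃ S, IsHalf (rematch σ a (τ a)) S ∧ IsHalf τ S) : ∃ S, IsHalf σ S ∧ IsHalf τ S := by
  obtain ⟨S, hσS, hτS⟩ := h
  by_cases hS : σ a ∈ S ↔ a ∉ S
  · exact ⟨S, hσS.of_rematch hσ hτa.symm hσa hS, hτS⟩
  · have flip {f : V → V} (hf : Function.Involutive f) (hfS : IsHalf f S) (hfa : f a = τ a) :
        IsHalf f (symmDiff S {a, τ a}) :=
      hfS.symmDiff fun v => by
        simp only [Set.mem_insert_iff, Set.mem_singleton_iff, ← hfa, hf.injective.eq_iff,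
          hf.eq_iff, or_comm]
    refine ⟨symmDiff S {a, τ a}, (flip (rematch_involutive hσ) hσS ?_).of_rematch hσ hτa.symm hσa
      ?_, flip hτ hτS rfl⟩
    · exact rematch_apply_left hτa.symm hσa
    · simp only [Set.mem_symmDiff, Set.mem_insert_iff, Set.mem_singleton_iff, hσa, hne]
      tauto

theorem rematch_ne_ssubset [DecidableEq V] {a : V} (hσ : Function.Involutive σ)
    (hτ : Function.Involutive τ) (hσa : σ a ≠ a) (hτa : τ a ≠ a) (hne : σ a ≠ τ a) :
    {v | rematch σ a (τ a) v ≠ τ v} ⊂ {v | σ v ≠ τ v} := by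
  refine Set.ssubset_iff_exists.2 ⟨fun v hv => ?_, a, hne,
    not_not.2 (rematch_apply_left hτa.symm hσa)⟩
  have hva : v ≠ a := by
    rintro rfl
    exact hv (rematch_apply_left hτa.symm hσa)
  have hvb : v ≠ τ a := by
    rintro rfl
    exact hv (by rw [rematch_apply_right hσ hτa.symm hσa, hτ a])
  intro heq
  refine hv ((rematch_apply_of_ne hσ hva hvb ?_ ?_).trans heq)
  · rintro rfl
    exact hvb (by rw [← hτ.eq_iff, ← heq, hσ a])
  · rintro rfl
    exact hva (hτ.injective (by rw [← heq, hσ]))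

theorem exists_isHalf_isHalf [Finite V] (hσ : Function.Involutive σ)
    (hτ : Function.Involutive τ) : ∃ S, IsHalf σ S ∧ IsHalf τ S := by
  classical
  induction hd : {v | σ v ≠ τ v}.ncard using Nat.strong_induction_on
    generalizing σ with | _ d ih
  by_cases h : ∀ v, σ v = v ∨ τ v = v ∨ σ v = τ v
  · exact exists_isHalf_isHalf_of_compatible hσ hτ h
  · push Not at h
    obtain ⟨a, hσa, hτa, hne⟩ := h
    have hlt := Set.ncard_lt_ncard (rematch_ne_ssubset hσ hτ hσa hτa hne)
    exact exists_isHalf_isHalf_of_rematch hσ hτ hσa hτa hne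
      (ih _ (hd ▸ hlt) (rematch_involutive hσ) rfl)

end Halves

section MatchingPerm

variable {V : Type*} {G : SimpleGraph V} {σ : Equiv.Perm V} {u v p q : V}

/-- A matching of `G`, encoded as the involution exchanging the two ends of every matching edge;
its fixed points are the unmatched vertices. -/
structure IsMatchingPerm (G : SimpleGraph V) (σ : Equiv.Perm V) : Prop where
  involutive : Function.Involutive σ
  adj : ∀ v, σ v ≠ v → G.Adj v (σ v)

theorem exists_isMatchingPerm_of_isPerfectMatching {M : G.Subgraph} (hM : M.IsPerfectMatching) :
    ∃ σ, IsMatchingPerm G σ ∧ ∀ u v, M.Adj u v ↔ σ u = v := by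
  choose f hf hf_unique using Subgraph.isPerfectMatching_iff.1 hM
  have hinv : Function.Involutive f := fun v => (hf_unique (f v) v (hf v).symm).symm
  refine ⟨hinv.toPerm f, ⟨hinv, fun v _ => (hf v).adj_sub⟩, fun u v => ⟨fun h => ?_, ?_⟩⟩
  · exact (hf_unique u v h).symm
  · rintro rfl
    exact hf u

/-- Claw-free graphs, the hypothesis of Sumner's theorem: no vertex has three distinct pairwise
non-adjacent neighbours. -/
def IsClawFree (G : SimpleGraph V) : Prop :=
  ∀ ⦃v a b c⦄, G.Adj v a → G.Adj v b → G.Adj v c → a ≠ b → a ≠ c → b ≠ c →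
    G.Adj a b ∨ G.Adj a c ∨ G.Adj b c

theorem eq_or_eq_or_eq_of_ncard_neighborSet_le_two [Finite V] {a b c : V}
    (hv : (G.neighborSet v).ncard ≤ 2) (ha : G.Adj v a) (hb : G.Adj v b) (hc : G.Adj v c) :
    a = b ∨ a = c ∨ b = c := by
  by_contra! h
  exact hv.not_gt <| (Set.two_lt_ncard (Set.toFinite _)).2 ⟨a, ha, b, hb, c, hc, h⟩

theorem isClawFree_of_ncard_neighborSet_le_two [Finite V]
    (hG : ∀ v, (G.neighborSet v).ncard ≤ 2) : IsClawFree G := by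
  intro v a b c ha hb hc hab hac hbc
  have := eq_or_eq_or_eq_of_ncard_neighborSet_le_two (hG v) ha hb hc
  tauto

theorem disjoint_swap_of_fixed [DecidableEq V] (hu : σ u = u) (hp : σ p = p) :
    σ.Disjoint (Equiv.swap u p) := fun v => by
  by_cases hvu : v = u
  · exact .inl (hvu ▸ hu)
  by_cases hvp : v = p
  · exact .inl (hvp ▸ hp)
  exact .inr (Equiv.swap_apply_of_ne_of_ne hvu hvp)

theorem IsMatchingPerm.mul_swap [DecidableEq V] (hσ : IsMatchingPerm G σ) (hu : σ u = u)
    (hp : σ p = p) (hup : G.Adj u p) : IsMatchingPerm G (σ * Equiv.swap u p) := by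
  have hdisj := disjoint_swap_of_fixed hu hp
  have hcomm (v : V) : Equiv.swap u p (σ v) = σ (Equiv.swap u p v) :=
    (Equiv.ext_iff.1 hdisj.commute v).symm
  refine ⟨fun v => ?_, fun v hv => ?_⟩
  · simp only [Equiv.Perm.mul_apply, hcomm, hσ.involutive _, Equiv.swap_apply_self]
  · rw [Equiv.Perm.mul_apply] at hv ⊢
    obtain hσv | hswap := hdisj v
    · rw [← hcomm, hσv] at hv ⊢
      obtain ⟨-, rfl | rfl⟩ := Equiv.swap_apply_ne_self_iff.1 hv
      · rwa [Equiv.swap_apply_left]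
      · rw [Equiv.swap_apply_right]
        exact hup.symm
    · rw [hswap] at hv ⊢
      exact hσ.adj v hv

theorem isMatchingPerm_rematch [DecidableEq V] (hσ : IsMatchingPerm G σ) (hu : σ u = u)
    (hp : σ p ≠ p) (hpu : G.Adj p u) : IsMatchingPerm G (rematch σ p u) := by
  refine ⟨rematch_involutive hσ.involutive, fun v hv => ?_⟩
  by_cases hvp : v = p
  · rwa [hvp, rematch_apply_left hpu.ne hp]
  by_cases hvu : v = u
  · rw [hvu, rematch_apply_right hσ.involutive hpu.ne hp]
    exact hpu.symm
  by_cases hvσp : v = σ p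
  · exact absurd (hvσp ▸ rematch_apply_partner_of_fixed hu) hv
  rw [rematch_apply_of_ne hσ.involutive hvp hvu hvσp (by rwa [hu])] at hv ⊢
  exact hσ.adj v hv

/-- A matching of `G`, encoded as in `IsMatchingPerm`, which leaves at most one vertex unmatched in
each connected component. -/
structure IsNearPerfect (G : SimpleGraph V) (σ : Equiv.Perm V) : Prop extends
    IsMatchingPerm G σ where
  eq_of_reachable : ∀ ⦃u v⦄, σ u = u → σ v = v → G.Reachable u v → u = v

theorem IsNearPerfect.odd_natCard_supp [Finite V] (hσ : IsNearPerfect G σ) (hv : σ v = v) :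
    Odd (Nat.card (G.connectedComponentMk v).supp) := by
  classical
  have := Fintype.ofFinite V
  let C := (G.connectedComponentMk v).supp
  have hC (x : V) : σ x ∈ C ↔ x ∈ C := by
    by_cases hx : σ x = x
    · rw [hx]
    · exact (ConnectedComponent.mem_supp_congr_adj _ (hσ.adj x hx)).symm
  let ρ : Equiv.Perm C := σ.subtypePerm hC
  have hsupp : ρ.support = Finset.univ.erase ⟨v, rfl⟩ := by
    ext ⟨x, hx⟩
    have hfix : σ x = x ↔ x = v :=
      ⟨fun h => hσ.eq_of_reachable h hv (ConnectedComponent.exact hx), fun h => h ▸ hv⟩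
    simp [ρ, hfix, Subtype.ext_iff]
  have heven : 2 ∣ ρ.support.card := Equiv.Perm.two_dvd_card_support <| Equiv.ext fun x =>
    Subtype.ext (hσ.involutive x)
  rw [Nat.card_eq_fintype_card, ← Finset.card_univ,
    ← Finset.card_erase_add_one (Finset.mem_univ ⟨v, rfl⟩), ← hsupp]
  exact (even_iff_two_dvd.2 heven).add_one

theorem IsNearPerfect.ncard_fixed_le_natCard_odd [Finite V] (hσ : IsNearPerfect G σ) :
    {v | σ v = v}.ncard ≤ Nat.card {c : G.ConnectedComponent // Odd (Nat.card c.supp)} :=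
  Nat.card_le_card_of_injective
    (fun v : {v | σ v = v} => ⟨G.connectedComponentMk v, hσ.odd_natCard_supp v.2⟩) fun u v huv =>
    Subtype.ext <| hσ.eq_of_reachable u.2 v.2 <| ConnectedComponent.exact (congrArg Subtype.val huv)

end MatchingPerm

section Maximum

variable {V : Type*} [Fintype V] [DecidableEq V] {G : SimpleGraph V} {σ : Equiv.Perm V}
  {u v p q : V}

/-- A matching of `G` of maximum size, encoded as in `IsMatchingPerm`; the size is measured by the
number of matched vertices. -/
def IsMaximumMatchingPerm (G : SimpleGraph V) (σ : Equiv.Perm V) : Prop :=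
  MaximalFor (IsMatchingPerm G) (fun τ => τ.support.card) σ

theorem exists_isMaximumMatchingPerm (G : SimpleGraph V) : ∃ σ, IsMaximumMatchingPerm G σ :=
  (Set.toFinite {σ | IsMatchingPerm G σ}).exists_maximalFor _ _
    ⟨1, fun _ => rfl, fun _ h => absurd rfl h⟩

theorem IsMaximumMatchingPerm.apply_ne_of_adj (hσ : IsMaximumMatchingPerm G σ) (hu : σ u = u)
    (hup : G.Adj u p) : σ p ≠ p := fun hp => by
  have hdisj := disjoint_swap_of_fixed hu hp
  have hcard := hσ.2 (hσ.1.mul_swap hu hp hup)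
  simp only [hdisj.card_support_mul, Equiv.Perm.card_support_swap hup.ne] at hcard
  omega

theorem isMaximumMatchingPerm_rematch (hσ : IsMaximumMatchingPerm G σ) (hu : σ u = u)
    (hup : G.Adj u p) : IsMaximumMatchingPerm G (rematch σ p u) := by
  refine ⟨isMatchingPerm_rematch hσ.1 hu (hσ.apply_ne_of_adj hu hup) hup.symm, fun τ hτ _ => ?_⟩
  simp only [card_support_rematch]
  by_contra! hlt
  exact hlt.not_ge (hσ.2 hτ hlt.le)

theorem IsMaximumMatchingPerm.exists_unmatching_partner (hσ : IsMaximumMatchingPerm G σ)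
    (hu : σ u = u) (hup : G.Adj u p) :
    ∃ τ, IsMaximumMatchingPerm G τ ∧ τ (σ p) = σ p ∧ ∀ v ≠ u, σ v = v → τ v = v ∧ v ≠ σ p := by
  have hp := hσ.apply_ne_of_adj hu hup
  refine ⟨rematch σ p u, isMaximumMatchingPerm_rematch hσ hu hup,
    rematch_apply_partner_of_fixed hu, fun v hvu hv => ?_⟩
  have hvp : v ≠ p := fun h => hp (h ▸ hv)
  have hvσp : v ≠ σ p := fun h => hvp (by rw [← hv, h, hσ.1.involutive])
  exact ⟨by rw [rematch_apply_of_ne hσ.1.involutive hvp hvu hvσp (by rwa [hu]), hv], hvσp⟩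

theorem IsMaximumMatchingPerm.exists_unmatched_closer (hσ : IsMaximumMatchingPerm G σ)
    (hG : IsClawFree G) (hu : σ u = u) (hup : G.Adj u p) (hpq : G.Adj p q) :
    ∃ τ x, IsMaximumMatchingPerm G τ ∧ τ x = x ∧ (x = q ∨ G.Adj x q) ∧
      ∀ v ≠ u, σ v = v → τ v = v ∧ v ≠ x := by
  by_cases huq : u = q ∨ G.Adj u q
  · exact ⟨σ, u, hσ, hu, huq, fun v hvu hv => ⟨hv, hvu⟩⟩
  by_cases hσpq : σ p = q ∨ G.Adj (σ p) q
  · obtain ⟨τ, hτ, hτx, hτv⟩ := hσ.exists_unmatching_partner hu hup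
    exact ⟨τ, σ p, hτ, hτx, hσpq, hτv⟩
  push Not at huq hσpq
  have hp := hσ.apply_ne_of_adj hu hup
  have huσp : G.Adj u (σ p) := by
    have hne : u ≠ σ p := fun h => hup.ne (by rw [← hu, h, hσ.1.involutive])
    obtain huq' | huσp | hqσp := hG hup.symm hpq (hσ.1.adj p hp) huq.1 hne hσpq.1.symm
    · exact absurd huq' huq.2
    · exact huσp
    · exact absurd hqσp.symm hσpq.2
  obtain ⟨τ, hτ, hτx, hτv⟩ := hσ.exists_unmatching_partner hu huσp
  rw [hσ.1.involutive] at hτx hτv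
  exact ⟨τ, p, hτ, hτx, .inr hpq, hτv⟩

theorem IsMaximumMatchingPerm.eq_of_walk (hσ : IsMaximumMatchingPerm G σ) (hG : IsClawFree G)
    (hu : σ u = u) (hv : σ v = v) (w : G.Walk u v) : u = v := by
  induction hd : w.length using Nat.strong_induction_on generalizing σ u with | _ d ih
  cases w with
  | nil => rfl
  | cons hup w =>
    cases w with
    | nil => exact absurd hv (hσ.apply_ne_of_adj hu hup)
    | cons hpq w =>
      by_contra huv
      obtain ⟨τ, x, hτ, hx, hxq, hτv⟩ := hσ.exists_unmatched_closer hG hu hup hpq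
      obtain ⟨hτv, hvx⟩ := hτv v (Ne.symm huv) hv
      simp only [Walk.length_cons] at hd
      obtain rfl | hxq := hxq
      · exact hvx (ih _ (by omega) hτ hx hτv w rfl).symm
      · exact hvx (ih _ (by simp only [Walk.length_cons]; omega) hτ hx hτv (.cons hxq w) rfl).symm

end Maximum

/-- **Sumner's theorem**, for a graph that need not be connected. -/
theorem exists_isNearPerfect {V : Type*} [Finite V] {G : SimpleGraph V} (hG : IsClawFree G) :
    ∃ σ, IsNearPerfect G σ := by
  classical
  have := Fintype.ofFinite V
  obtain ⟨σ, hσ⟩ := exists_isMaximumMatchingPerm G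
  exact ⟨σ, hσ.1, fun u v hu hv ⟨w⟩ => hσ.eq_of_walk hG hu hv w⟩

section StarForest

variable {W : Type*} {H : SimpleGraph W} {A B : Set W} {v : W}

theorem supp_connectedComponentMk_subset (hv : v ∈ A) (hA : ∀ x ∈ A, H.neighborSet x ⊆ A) :
    (H.connectedComponentMk v).supp ⊆ A := by
  intro x hx
  obtain ⟨w⟩ : H.Reachable v x := (ConnectedComponent.exact hx).symm
  induction w with
  | nil => exact hv
  | cons hadj w ih => exact ih (hA _ hv hadj) (ConnectedComponent.sound w.reachable.symm)

/-- `H` is a disjoint union of stars centred at vertices of `B` and of components with at most one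
edge which avoid `B`; the colour classes of the bisection induce graphs of this shape. -/
structure IsStarForest_s17 (H : SimpleGraph W) (B : Set W) : Prop where
  isIndepSet : H.IsIndepSet B
  subsingleton_neighborSet : ∀ v ∉ B, (H.neighborSet v).Subsingleton

namespace IsStarForest_s17

theorem isAcyclic_s17 (h : IsStarForest_s17 H B) : H.IsAcyclic := by
  classical
  have hmem {v : W} {c : H.Walk v v} (hc : c.IsCycle) : v ∈ B := by
    by_contra hv
    exact hc.snd_ne_penultimate <| h.subsingleton_neighborSet v hv (c.adj_snd hc.not_nil)
      (c.adj_penultimate hc.not_nil).symm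
  intro v c hc
  have hadj := c.adj_snd hc.not_nil
  exact h.isIndepSet (hmem hc) (hmem (hc.rotate (c.getVert_mem_support 1))) hadj.ne hadj

theorem natCard_supp_le_of_disjoint [Finite W] (h : IsStarForest_s17 H B)
    (hv : Disjoint (H.neighborSet v) B) :
    Nat.card (H.connectedComponentMk v).supp ≤ (H.neighborSet v).ncard + 1 := by
  have hsub : (H.connectedComponentMk v).supp ⊆ insert v (H.neighborSet v) := by
    refine supp_connectedComponentMk_subset (Set.mem_insert _ _) ?_
    rintro x (rfl | hx) y hy
    · exact .inr hy
    · exact .inl (h.subsingleton_neighborSet x (hv.notMem_of_mem_left hx) hy hx.symm)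
  exact (Set.ncard_le_ncard hsub (Set.toFinite _)).trans (Set.ncard_insert_le _ _)

theorem natCard_supp_le_two [Finite W] (h : IsStarForest_s17 H B) {c : H.ConnectedComponent}
    (hc : Disjoint c.supp B) : Nat.card c.supp ≤ 2 := by
  obtain ⟨v, rfl⟩ := c.exists_rep
  have hv : v ∉ B := hc.notMem_of_mem_left rfl
  have hdisj : Disjoint (H.neighborSet v) B :=
    hc.mono_left fun x hx => ConnectedComponent.sound (Adj.reachable hx).symm
  have hle : (H.neighborSet v).ncard ≤ 1 := Set.ncard_le_one_iff_subsingleton.2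
    (h.subsingleton_neighborSet v hv)
  exact (h.natCard_supp_le_of_disjoint hdisj).trans (by omega)

theorem natCard_supp_le [Finite W] (h : IsStarForest_s17 H B) {d : ℕ} (hd : 1 ≤ d)
    (hB : ∀ v ∈ B, (H.neighborSet v).ncard ≤ d) (c : H.ConnectedComponent) :
    Nat.card c.supp ≤ d + 1 := by
  by_cases hc : Disjoint c.supp B
  · exact (h.natCard_supp_le_two hc).trans (by omega)
  · obtain ⟨b, rfl, hb⟩ := Set.not_disjoint_iff.1 hc
    refine (h.natCard_supp_le_of_disjoint ?_).trans (Nat.add_le_add_right (hB b hb) 1)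
    exact Set.disjoint_left.2 fun x hx hxB => h.isIndepSet hb hxB (Adj.ne hx) hx

theorem natCard_components_card_eq_le [Finite W] (h : IsStarForest_s17 H B) {k : ℕ} (hk : 2 < k) :
    Nat.card {c : H.ConnectedComponent // Nat.card c.supp = k} ≤ B.ncard := by
  have hsub : {c : H.ConnectedComponent | Nat.card c.supp = k} ⊆ H.connectedComponentMk '' B := by
    intro c hc
    have hdisj : ¬ Disjoint c.supp B := fun hdisj =>
      (h.natCard_supp_le_two hdisj).not_gt (hk.trans_eq hc.symm)
    obtain ⟨b, hbc, hb⟩ := Set.not_disjoint_iff.1 hdisj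
    exact ⟨b, hb, hbc⟩
  exact (Set.ncard_le_ncard hsub (Set.toFinite _)).trans (Set.ncard_image_le (Set.toFinite _))

end IsStarForest_s17

end StarForest

section Bisection

variable {V : Type*} {G T : SimpleGraph V} {σ τ : Equiv.Perm V} {S : Set V}

theorem induce_eq_induce_of_isHalf (hS : IsHalf τ S) (hτ : ∀ v, τ v ≠ v)
    (hT : ∀ u v, T.Adj u v ↔ G.Adj u v ∧ τ u ≠ v) : G.induce S = T.induce S := by
  ext u v
  have hne : τ u ≠ v := fun h => hS.apply_notMem u.2 (hτ u) (h ▸ v.2)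
  simp only [comap_adj, Function.Embedding.subtype_apply, hT, hne, ne_eq, not_false_eq_true,
    and_true]

variable [Finite V]

theorem ncard_neighborSet_lt_of_not_adj {v w : V} (hle : T ≤ G) (hG : G.Adj v w)
    (hT : ¬ T.Adj v w) : (T.neighborSet v).ncard < (G.neighborSet v).ncard :=
  Set.ncard_lt_ncard <| Set.ssubset_iff_exists.2 ⟨fun _ h => hle h, w, hG, hT⟩

theorem IsNearPerfect.isStarForest_induce (hσ : IsNearPerfect T σ)
    (hT : ∀ v, (T.neighborSet v).ncard ≤ 2) (hS : IsHalf σ S) :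
    IsStarForest_s17 (T.induce S) {v | σ v = v} where
  isIndepSet u hu v hv huv hadj :=
    huv <| Subtype.ext <| hσ.eq_of_reachable hu hv (Adj.reachable hadj)
  subsingleton_neighborSet v hv a ha b hb := by
    have hσv : σ v ∉ S := hS.apply_notMem v.2 hv
    have := eq_or_eq_or_eq_of_ncard_neighborSet_le_two (hT v) ha hb (hσ.adj v hv)
    have haσ : (a : V) ≠ σ v := fun h => hσv (h ▸ a.2)
    have hbσ : (b : V) ≠ σ v := fun h => hσv (h ▸ b.2)
    exact Subtype.ext (this.resolve_right (not_or.2 ⟨haσ, hbσ⟩))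

theorem IsNearPerfect.monoOK (hσ : IsNearPerfect T σ) (hT : ∀ v, (T.neighborSet v).ncard ≤ 2)
    (hS : IsHalf σ S) : MonoOK T 3 S := by
  have hstar := hσ.isStarForest_induce hT hS
  refine ⟨hstar.isAcyclic_s17, hstar.natCard_supp_le one_le_two fun v _ => ?_⟩
  refine le_trans ?_ (hT v)
  exact Set.ncard_le_ncard_of_injOn Subtype.val (fun w hw => hw) Subtype.val_injective.injOn

theorem IsNearPerfect.natCard_components_card_eq_three_add_le (hσ : IsNearPerfect T σ)
    (hT : ∀ v, (T.neighborSet v).ncard ≤ 2) (hS : IsHalf σ S) :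
    Nat.card {c : (T.induce S).ConnectedComponent // Nat.card c.supp = 3} +
      Nat.card {c : (T.induce Sᶜ).ConnectedComponent // Nat.card c.supp = 3} ≤
        Nat.card {c : T.ConnectedComponent // Odd (Nat.card c.supp)} := by
  have hside {S : Set V} (hS : IsHalf σ S) :
      Nat.card {c : (T.induce S).ConnectedComponent // Nat.card c.supp = 3} ≤
        ({v | σ v = v} ∩ S).ncard := by
    refine ((hσ.isStarForest_induce hT hS).natCard_components_card_eq_le (by omega)).trans ?_
    exact Set.ncard_le_ncard_of_injOn Subtype.val (fun v hv => ⟨hv, v.2⟩)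
      Subtype.val_injective.injOn
  calc _ ≤ ({v | σ v = v} ∩ S).ncard + ({v | σ v = v} ∩ Sᶜ).ncard :=
        add_le_add (hside hS) (hside hS.compl)
    _ = {v | σ v = v}.ncard := by
        rw [← Set.sdiff_eq, Set.ncard_inter_add_ncard_sdiff_eq_ncard]
    _ ≤ _ := hσ.ncard_fixed_le_natCard_odd

end Bisection

theorem stmt17_general {V : Type*} [Fintype V] (G : SimpleGraph V)
    (hG : ∀ v, Nat.card (G.neighborSet v) ≤ 3) (M : G.Subgraph) (hM : M.IsPerfectMatching)
    (T : SimpleGraph V) (hT : ∀ u v, T.Adj u v ↔ (G.Adj u v ∧ ¬ M.Adj u v))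
    (s : ℕ) (hs : s = Nat.card {c : T.ConnectedComponent // Odd (Nat.card c.supp)}) :
    ∃ S : Set V, IsWeakBisection G 5 S ∧
      Nat.card {c : (G.induce S).ConnectedComponent // Nat.card c.supp = 3} +
        Nat.card {c : (G.induce (Sᶜ : Set V)).ConnectedComponent // Nat.card c.supp = 3}
        ≤ s := by
  obtain ⟨τ, hτ, hMτ⟩ := exists_isMatchingPerm_of_isPerfectMatching hM
  have hτ_ne (v : V) : τ v ≠ v := fun h => ((hMτ v v).2 h).ne rfl
  simp only [hMτ] at hT
  have hT2 (v : V) : (T.neighborSet v).ncard ≤ 2 := Nat.lt_succ_iff.1 <|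
    (ncard_neighborSet_lt_of_not_adj (fun u w h => ((hT u w).1 h).1) (hτ.adj v (hτ_ne v))
      fun h => ((hT _ _).1 h).2 rfl).trans_le (hG v)
  obtain ⟨σ, hσ⟩ := exists_isNearPerfect (isClawFree_of_ncard_neighborSet_le_two hT2)
  obtain ⟨S, hτS, hσS⟩ := exists_isHalf_isHalf hτ.involutive hσ.involutive
  have hS : G.induce S = T.induce S := induce_eq_induce_of_isHalf hτS hτ_ne hT
  have hSc : G.induce Sᶜ = T.induce Sᶜ := induce_eq_induce_of_isHalf hτS.compl hτ_ne hT
  refine ⟨S, ⟨hτS.natCard_eq_natCard_compl hτ_ne, ?_, ?_⟩, ?_⟩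
  · rw [MonoOK, hS]
    exact hσ.monoOK hT2 hσS
  · rw [MonoOK, hSc]
    exact hσ.monoOK hT2 hσS.compl
  · rw [hS, hSc, hs]
    exact hσ.natCard_components_card_eq_three_add_le hT2 hσS

/-- If M is a perfect matching of a cubic graph G and the 2-factor T = E(G) \ M
has s odd cycle components, then G has a 5-weak bisection in which the number of
monochromatic paths on 3 vertices is at most s. -/
theorem stmt17 {V : Type*} [Fintype V] (G : SimpleGraph V) (hG : IsCubic G)
    (M : G.Subgraph) (hM : M.IsPerfectMatching)
    (T : SimpleGraph V) (hT : ∀ u v, T.Adj u v ↔ (G.Adj u v ∧ ¬ M.Adj u v))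
    (s : ℕ) (hs : s = Nat.card {c : T.ConnectedComponent // Odd (Nat.card c.supp)}) :
    ∃ S : Set V, IsWeakBisection G 5 S ∧
      Nat.card {c : (G.induce S).ConnectedComponent // Nat.card c.supp = 3} +
        Nat.card {c : (G.induce (Sᶜ : Set V)).ConnectedComponent // Nat.card c.supp = 3}
        ≤ s :=
  stmt17_general G (fun v => (hG v).le) M hM T hT s hs
end
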